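/- arXiv:2111.02746 — 2 statements merged into one kernel-verified Lean document; each statement's English description precedes it below -/
import Mathlib

section
/- For every integer n ≥ 2, D(n) = 3^k, where k = min{ j ∈ ℤ⁺ : 3^j ≥ √n }. -/
/-!
Since `(b³ + b) - (a³ + a) = (b - a) (a² + ab + b² + 1)` and the Eisenstein norm `a² + ab + b²` is
never `-1` modulo `3`, a collision modulo `9ᵏ` forces `9ᵏ ∣ b - a`. So it suffices that every
`m ≥ 1` has a collision `a < b ≤ 9ᴷ + 1` modulo `m²`, where `3ᴷ ≤ m < 3ᴷ⁺¹`; all that is used of `K`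
is that `9 b ≤ m² + 9` is enough, apart from `m = 3ᴷ`, `m = 2 · 3ᴷ` and finitely many `m`.

If `m = q r` with `q` a power of a prime `p ≥ 5` not dividing `r`, and `-3` is a square modulo `p`,
then `b - a = q r²` reduces the problem to `3 a² + 1 ≡ 0` modulo `q`. If `-3` is not a square modulo
`p`, take `(a, b) = r² (u, v)`: now the norm of `(u, v)` has to be `-r⁻⁴` modulo `q²` and at most
`q⁴ / 81`. Such vectors contain a coset of the lattice spanned by `q w` and `q² ℤ²` for any
primitive vector `w` whose norm is not a square modulo `p`, and reducing in this lattice gives a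
short one when the norm of `w` lies between `19` and `3 q`; Thue's lemma supplies `w`.
For small `q`, and apart from a table, `b - a = r² e` with `e ≤ p / 2` leaves a conic modulo `p`,
whose points lift to roots modulo `q²` by Hensel's lemma.
-/

open Polynomial

/-- The Eisenstein norm `x² + xy + y²`, that is, the norm of `x - yω` for a primitive cube root
of unity `ω`. -/
def normForm (x y : ℤ) : ℤ := x ^ 2 + x * y + y ^ 2

/-- Two of the values `a³ + a` with `1 ≤ a ≤ n` agree modulo `m²`. -/
def HasCollision (m n : ℕ) : Prop :=
  ∃ a b : ℕ, 1 ≤ a ∧ a < b ∧ b ≤ n ∧ b ^ 3 + b ≡ a ^ 3 + a [MOD m ^ 2]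

lemma HasCollision.mono {m n n' : ℕ} (h : HasCollision m n) (hn : n ≤ n') :
    HasCollision m n' := by
  obtain ⟨a, b, ha, hab, hb, hmod⟩ := h
  exact ⟨a, b, ha, hab, hb.trans hn, hmod⟩

lemma cube_add_self_modEq_iff (M a b : ℕ) :
    b ^ 3 + b ≡ a ^ 3 + a [MOD M] ↔ (M : ℤ) ∣ (b - a) * (normForm a b + 1) := by
  rw [Nat.ModEq.comm, ← Int.natCast_modEq_iff, Int.modEq_iff_dvd, normForm]
  push_cast
  ring_nf

lemma hasCollision_of_dvd {m a d : ℕ} (ha : 1 ≤ a) (hd : 1 ≤ d)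
    (h : m ^ 2 ∣ d * (3 * a ^ 2 + 3 * a * d + d ^ 2 + 1)) : HasCollision m (a + d) := by
  refine ⟨a, a + d, ha, by lia, le_rfl, ?_⟩
  have hfactor : (a + d) ^ 3 + (a + d) =
      a ^ 3 + a + d * (3 * a ^ 2 + 3 * a * d + d ^ 2 + 1) := by ring
  rw [hfactor]
  exact (Nat.ModEq.refl (a ^ 3 + a)).add (Nat.modEq_zero_iff_dvd.2 h)

lemma le_nine_pow_log_add_one {m x : ℕ} (h : 9 * x ≤ m ^ 2 + 9) :
    x ≤ 9 ^ Nat.log 3 m + 1 := by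
  have hlt : m ^ 2 < (3 ^ (Nat.log 3 m + 1)) ^ 2 :=
    Nat.pow_lt_pow_left (Nat.lt_pow_succ_log_self (by norm_num) m) two_ne_zero
  have hpow : (3 ^ (Nat.log 3 m + 1)) ^ 2 = 9 * 9 ^ Nat.log 3 m := by
    rw [← pow_mul, mul_comm, pow_mul, pow_succ']
    norm_num
  lia

lemma HasCollision.of_nine_mul_le {m n : ℕ} (h : HasCollision m n) (hn : 9 * n ≤ m ^ 2 + 9) :
    HasCollision m (9 ^ Nat.log 3 m + 1) :=
  h.mono (le_nine_pow_log_add_one hn)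

/-! ### Powers of three -/

lemma not_three_dvd_normForm_add_one (x y : ℤ) : ¬ 3 ∣ normForm x y + 1 := by
  intro h
  have hmod : ((normForm x y + 1 : ℤ) : ZMod 3) = 0 := (ZMod.intCast_zmod_eq_zero_iff_dvd _ 3).2 h
  have hne : ∀ x y : ZMod 3, x ^ 2 + x * y + y ^ 2 + 1 ≠ 0 := by decide
  rw [normForm] at hmod
  exact hne x y (by exact_mod_cast hmod)

lemma not_hasCollision_three_pow (k : ℕ) : ¬ HasCollision (3 ^ k) (9 ^ k) := by
  rintro ⟨a, b, ha, hab, hb, hmod⟩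
  rw [← pow_mul, mul_comm, pow_mul, cube_add_self_modEq_iff] at hmod
  have hcop : IsCoprime (((3 ^ 2) ^ k : ℕ) : ℤ) (normForm a b + 1) := by
    rw [Nat.cast_pow, Nat.cast_pow]
    exact ((Int.prime_three.coprime_iff_not_dvd.2
      (not_three_dvd_normForm_add_one a b)).pow_left).pow_left
  have hle := Int.le_of_dvd (by lia) (hcop.dvd_of_dvd_mul_right hmod)
  push_cast at hle
  zify at hb
  lia

/-! ### Hensel lifting -/

lemma exists_prime_pow_dvd_eval {p : ℕ} (hp : p.Prime) (f : ℤ[X]) {x₀ : ℤ}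
    (h₀ : (p : ℤ) ∣ f.eval x₀) (h₁ : ¬ (p : ℤ) ∣ f.derivative.eval x₀) (n : ℕ) :
    ∃ x : ℤ, (p : ℤ) ^ n ∣ f.eval x ∧ (p : ℤ) ∣ x - x₀ := by
  suffices h : ∃ x : ℤ, (p : ℤ) ^ (n + 1) ∣ f.eval x ∧ (p : ℤ) ∣ x - x₀ by
    obtain ⟨x, hx, hxx₀⟩ := h
    exact ⟨x, (pow_dvd_pow _ n.le_succ).trans hx, hxx₀⟩
  induction n with
  | zero => exact ⟨x₀, by simpa using h₀, by simp⟩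
  | succ n ih =>
    obtain ⟨x, ⟨w, hw⟩, hxx₀⟩ := ih
    have hcop : IsCoprime (p : ℤ) (f.derivative.eval x) := by
      rw [(Nat.prime_iff_prime_int.1 hp).coprime_iff_not_dvd]
      intro h
      exact h₁ ((dvd_sub_right h).1 (hxx₀.trans (sub_dvd_eval_sub x x₀ _)))
    obtain ⟨s, r, hsr⟩ := hcop
    obtain ⟨k, hk⟩ := f.binomExpansion x (-(p ^ (n + 1) * (w * r)))
    refine ⟨x + -(p ^ (n + 1) * (w * r)), ⟨w * s + k * (w * r) ^ 2 * p ^ n, ?_⟩, ?_⟩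
    · rw [hk, hw]
      linear_combination -(p : ℤ) ^ (n + 1) * w * hsr
    · rw [add_sub_right_comm, pow_succ', mul_assoc]
      exact dvd_add hxx₀ (dvd_neg.2 (Dvd.intro _ rfl))

lemma exists_prime_pow_dvd_quadratic {p : ℕ} (hp : p.Prime) {α β γ x₀ : ℤ}
    (h₀ : (p : ℤ) ∣ α * x₀ ^ 2 + β * x₀ + γ) (h₁ : ¬ (p : ℤ) ∣ 2 * α * x₀ + β) (n : ℕ) :
    ∃ x : ℤ, (p : ℤ) ^ n ∣ α * x ^ 2 + β * x + γ ∧ (p : ℤ) ∣ x - x₀ := by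
  have h := exists_prime_pow_dvd_eval hp (C α * X ^ 2 + C β * X + C γ) (x₀ := x₀)
    (by simpa using h₀) (by convert h₁ using 2; simp; ring) n
  simpa using h

lemma exists_natCast_dvd_sub {q : ℕ} (hq : 0 < q) (x : ℤ) :
    ∃ a : ℕ, 1 ≤ a ∧ a ≤ q ∧ (q : ℤ) ∣ a - x := by
  obtain ⟨z, hz, hmod⟩ := Int.existsUnique_equiv_nat (x - 1) (b := q) (by exact_mod_cast hq)
  refine ⟨z + 1, by lia, by lia, ?_⟩
  convert hmod.symm.dvd using 1
  push_cast
  ring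

lemma dvd_quadratic_of_dvd_sub {M x y : ℤ} (α β γ : ℤ) (hxy : M ∣ y - x)
    (hx : M ∣ α * x ^ 2 + β * x + γ) : M ∣ α * y ^ 2 + β * y + γ := by
  rw [show α * y ^ 2 + β * y + γ
    = α * x ^ 2 + β * x + γ + (y - x) * (α * (y + x) + β) by ring]
  exact dvd_add hx (hxy.mul_right _)

lemma exists_nat_prime_pow_dvd_quadratic {p : ℕ} (hp : p.Prime) {α β γ x₀ : ℤ}
    (h₀ : (p : ℤ) ∣ α * x₀ ^ 2 + β * x₀ + γ) (h₁ : ¬ (p : ℤ) ∣ 2 * α * x₀ + β) (n : ℕ) :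
    ∃ a : ℕ, 1 ≤ a ∧ a ≤ p ^ n ∧ (p : ℤ) ^ n ∣ α * a ^ 2 + β * a + γ := by
  obtain ⟨x, hx, -⟩ := exists_prime_pow_dvd_quadratic hp h₀ h₁ n
  obtain ⟨a, ha, hap, hax⟩ := exists_natCast_dvd_sub (pow_pos hp.pos n) x
  exact ⟨a, ha, hap, dvd_quadratic_of_dvd_sub α β γ (by exact_mod_cast hax) hx⟩

/-! ### Moduli `2 ^ j * 3 ^ i` -/

lemma hasCollision_three_pow (i : ℕ) : HasCollision (3 ^ i) (1 + 9 ^ i) := by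
  refine hasCollision_of_dvd le_rfl (Nat.one_le_pow _ _ (by norm_num)) ?_
  rw [← pow_mul, mul_comm i, pow_mul]
  exact Dvd.intro _ rfl

lemma hasCollision_two_mul_three_pow (i : ℕ) : HasCollision (2 * 3 ^ i) (1 + 9 ^ i) := by
  refine hasCollision_of_dvd le_rfl (Nat.one_le_pow _ _ (by norm_num)) ?_
  rw [mul_pow, ← pow_mul, mul_comm i, pow_mul, mul_comm]
  apply Nat.mul_dvd_mul_left
  have hmod : 9 ^ i % 4 = 1 := by simp [Nat.pow_mod]
  obtain ⟨w, hw⟩ : ∃ w, 9 ^ i = 4 * w + 1 := ⟨9 ^ i / 4, by lia⟩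
  rw [hw]
  exact ⟨2 + 5 * w + 4 * w ^ 2, by ring⟩

lemma hasCollision_four_mul_three_pow (i : ℕ) : HasCollision (4 * 3 ^ i) (6 + 9 ^ i) := by
  refine hasCollision_of_dvd (by norm_num) (Nat.one_le_pow _ _ (by norm_num)) ?_
  rw [mul_pow, ← pow_mul, mul_comm i, pow_mul, mul_comm]
  apply Nat.mul_dvd_mul_left
  have hmod : 9 ^ i % 8 = 1 := by simp [Nat.pow_mod]
  obtain ⟨w, hw⟩ : ∃ w, 9 ^ i = 8 * w + 1 := ⟨9 ^ i / 8, by lia⟩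
  rw [hw]
  exact ⟨8 + 10 * w + 4 * w ^ 2, by ring⟩

-- `a = 2b + 1` and `d = 4r²` turn `3a² + 3ad + d² + 1` into four times the quadratic below.
lemma hasCollision_two_pow_mul_of_dvd {j r b : ℕ} (hr : 0 < r)
    (hb : 4 ^ (j + 1) ∣ 3 * b ^ 2 + (3 + 6 * r ^ 2) * b + (1 + 3 * r ^ 2 + 4 * r ^ 4)) :
    HasCollision (2 ^ (j + 3) * r) (2 * b + 1 + 4 * r ^ 2) := by
  refine hasCollision_of_dvd (by lia) (by have := Nat.pow_pos (n := 2) hr; lia) ?_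
  have hsq : (2 ^ (j + 3) * r) ^ 2 = 4 ^ (j + 1) * (16 * r ^ 2) := by
    rw [show 4 = 2 ^ 2 by norm_num, ← pow_mul]
    ring
  obtain ⟨w, hw⟩ := hb
  rw [hsq]
  refine ⟨w, ?_⟩
  linear_combination 16 * r ^ 2 * hw

lemma exists_four_pow_dvd_quadratic {r : ℕ} (hr : Odd r) (n : ℕ) :
    ∃ b : ℕ, b < 4 ^ n ∧
      4 ^ n ∣ 3 * b ^ 2 + (3 + 6 * r ^ 2) * b + (1 + 3 * r ^ 2 + 4 * r ^ 4) := by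
  obtain ⟨s, rfl⟩ := hr
  obtain ⟨x, hx, -⟩ := exists_prime_pow_dvd_quadratic Nat.prime_two (x₀ := 0)
    (α := 3) (β := 3 + 6 * (2 * s + 1) ^ 2) (γ := 1 + 3 * (2 * s + 1) ^ 2 + 4 * (2 * s + 1) ^ 4)
    ⟨2 + 6 * s ^ 2 + 6 * s + 2 * (2 * s + 1) ^ 4, by push_cast; ring⟩ (by push_cast; lia) (2 * n)
  obtain ⟨b, hb, hbx⟩ := Int.existsUnique_equiv_nat x (b := 4 ^ n) (by positivity)
  refine ⟨b, by exact_mod_cast hb, ?_⟩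
  rw [pow_mul] at hx
  exact_mod_cast dvd_quadratic_of_dvd_sub _ _ _ hbx.symm.dvd hx

/-- The roots of `3b² + 9b + 8` modulo `4ⁿ` come in pairs `b, -3 - b`, and one of each pair lies
in the lower half of the residues. -/
lemma exists_small_four_pow_dvd {n : ℕ} (hn : 1 ≤ n) :
    ∃ b : ℕ, 2 * b + 3 ≤ 4 ^ n ∧ 4 ^ n ∣ 3 * b ^ 2 + 9 * b + 8 := by
  obtain ⟨b, hb, hdvd⟩ := exists_four_pow_dvd_quadratic odd_one n
  norm_num at hdvd
  have h4 : 4 ∣ 4 ^ n := dvd_pow_self _ (by lia)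
  have hb1 : b + 1 ≠ 4 ^ n ∧ b + 2 ≠ 4 ^ n := by
    have hroot : 4 ∣ 3 * b ^ 2 + 9 * b + 8 := h4.trans hdvd
    constructor <;> intro h <;> rw [← h] at h4
    · obtain ⟨c, hc⟩ : ∃ c, b = 4 * c + 3 := ⟨b / 4, by lia⟩
      subst hc
      ring_nf at hroot
      lia
    · obtain ⟨c, hc⟩ : ∃ c, b = 4 * c + 2 := ⟨b / 4, by lia⟩
      subst hc
      ring_nf at hroot
      lia
  rcases le_or_gt (2 * b + 3) (4 ^ n) with hle | hlt
  · exact ⟨b, hle, hdvd⟩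
  · obtain ⟨b', hb'⟩ : ∃ b', 4 ^ n = b + b' + 3 := ⟨4 ^ n - 3 - b, by lia⟩
    refine ⟨b', by lia, ?_⟩
    obtain ⟨w, hw⟩ := hdvd
    rw [hb'] at hw ⊢
    zify at hw ⊢
    exact ⟨w + 3 * (b' - b), by linear_combination hw⟩

lemma hasCollision_two_pow_mul {j r : ℕ} (hr : Odd r) (hr3 : r = 1 ∨ 3 ≤ r) :
    HasCollision (2 ^ (j + 3) * r) (9 ^ Nat.log 3 (2 ^ (j + 3) * r) + 1) := by
  have hsq : (2 ^ (j + 3) * r) ^ 2 = 16 * 4 ^ (j + 1) * r ^ 2 := by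
    rw [show 4 = 2 ^ 2 by norm_num, ← pow_mul]
    ring
  rcases hr3 with rfl | hr3
  · obtain ⟨b, hle, hdvd⟩ := exists_small_four_pow_dvd (n := j + 1) (by lia)
    refine (hasCollision_two_pow_mul_of_dvd one_pos ?_).of_nine_mul_le (n := 2 * b + 1 + 4 * 1 ^ 2)
      (by lia)
    simpa using hdvd
  · obtain ⟨b, hlt, hdvd⟩ := exists_four_pow_dvd_quadratic hr (j + 1)
    refine (hasCollision_two_pow_mul_of_dvd (by lia) hdvd).of_nine_mul_le ?_
    rw [hsq]
    have h4 : 4 ≤ 4 ^ (j + 1) := Nat.le_self_pow (by lia) 4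
    have hr9 : 9 ≤ r ^ 2 := by nlinarith
    nlinarith [Nat.mul_le_mul h4 hr9]

lemma hasCollision_two_pow_mul_three_pow (j i : ℕ) :
    HasCollision (2 ^ j * 3 ^ i) (9 ^ Nat.log 3 (2 ^ j * 3 ^ i) + 1) := by
  have hlog (l c : ℕ) (hlo : 3 ^ l ≤ c) (hhi : c < 3 ^ (l + 1)) : Nat.log 3 c = l :=
    Nat.log_eq_of_pow_le_of_lt_pow hlo hhi
  have hpos : 0 < 3 ^ i := by positivity
  match j with
  | 0 =>
    rw [pow_zero, one_mul, Nat.log_pow (by norm_num), add_comm]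
    exact hasCollision_three_pow i
  | 1 =>
    rw [pow_one, hlog i _ (by lia) (by rw [pow_succ]; lia), add_comm]
    exact hasCollision_two_mul_three_pow i
  | 2 =>
    rw [show 2 ^ 2 = 4 by norm_num, hlog (i + 1) _ (by rw [pow_succ]; lia)
      (by rw [pow_succ, pow_succ]; lia)]
    refine (hasCollision_four_mul_three_pow i).mono ?_
    have := Nat.one_le_pow i 9 (by norm_num)
    rw [pow_succ]
    lia
  | j + 3 =>
    refine hasCollision_two_pow_mul (Odd.pow (by decide)) ?_
    rcases i with _ | i
    · exact .inl rfl
    · exact .inr (Nat.le_self_pow i.succ_ne_zero 3)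

/-! ### Prime powers modulo which `-3` is a square -/

lemma exists_nat_prime_pow_dvd_mul_sq_add_one {p : ℕ} [Fact p.Prime] (hp2 : p ≠ 2) {A : ℤ}
    (hsq : IsSquare ((-A : ℤ) : ZMod p)) (hA : ¬ (p : ℤ) ∣ A) (n : ℕ) :
    ∃ a : ℕ, 1 ≤ a ∧ a ≤ p ^ n ∧ (p : ℤ) ^ n ∣ A * a ^ 2 + 1 := by
  have hp : p.Prime := Fact.out
  obtain ⟨s, hs⟩ := hsq
  have hA0 : (A : ZMod p) ≠ 0 := mt (ZMod.intCast_zmod_eq_zero_iff_dvd A p).1 hA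
  have hs0 : s ≠ 0 := by
    rintro rfl
    exact hA0 (by simpa using hs)
  obtain ⟨x₀, hx₀⟩ := ZMod.intCast_surjective s⁻¹
  have hroot : (p : ℤ) ∣ A * x₀ ^ 2 + 0 * x₀ + 1 := by
    rw [← ZMod.intCast_zmod_eq_zero_iff_dvd]
    push_cast at hs ⊢
    rw [hx₀, neg_eq_iff_eq_neg.1 hs]
    field_simp
    ring
  have hsimple : ¬ (p : ℤ) ∣ 2 * A * x₀ + 0 := by
    have h2 : (2 : ZMod p) ≠ 0 := Ring.two_ne_zero (by rwa [ringChar.eq (ZMod p) p])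
    rw [← ZMod.intCast_zmod_eq_zero_iff_dvd]
    push_cast
    rw [hx₀, add_zero]
    exact mul_ne_zero (mul_ne_zero h2 hA0) (inv_ne_zero hs0)
  simpa using exists_nat_prime_pow_dvd_quadratic hp hroot hsimple n

lemma not_natCast_dvd_three {p : ℕ} (hp5 : 5 ≤ p) : ¬ (p : ℤ) ∣ 3 := fun h => by
  have := Nat.le_of_dvd (by norm_num) (Int.natCast_dvd_natCast.1 h)
  lia

-- With `d = p ^ j * m ^ 2`, the factor `3a² + 3ad + d² + 1` is `3a² + 1` modulo `p ^ j`.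
lemma hasCollision_of_isSquare_neg_three {p j m : ℕ} [Fact p.Prime] (hp5 : 5 ≤ p)
    (hq : 18 ≤ p ^ j) (hm : 0 < m) (hsq : IsSquare (-3 : ZMod p)) :
    HasCollision (p ^ j * m) (9 ^ Nat.log 3 (p ^ j * m) + 1) := by
  obtain ⟨a, ha, haq, hdvd⟩ := exists_nat_prime_pow_dvd_mul_sq_add_one (p := p) (A := 3) (by lia)
    (by exact_mod_cast hsq) (not_natCast_dvd_three hp5) j
  have hm2 : 0 < m ^ 2 := by positivity
  refine (hasCollision_of_dvd (d := p ^ j * m ^ 2) ha (by nlinarith) ?_).of_nine_mul_le ?_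
  · have hdvd' : p ^ j ∣ 3 * a ^ 2 + 1 := by exact_mod_cast hdvd
    obtain ⟨w, hw⟩ := hdvd'
    exact ⟨w + 3 * a * m ^ 2 + p ^ j * (m ^ 2) ^ 2, by linear_combination p ^ j * m ^ 2 * hw⟩
  · nlinarith [Nat.mul_le_mul_right (p ^ j * m ^ 2) hq, Nat.mul_le_mul_left (p ^ j) hm2]

/-! ### Short vectors in cosets of the Eisenstein lattice -/

lemma four_mul_normForm (x y : ℤ) : 4 * normForm x y = (2 * x + y) ^ 2 + 3 * y ^ 2 := by
  rw [normForm]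
  ring

lemma normForm_nonneg (x y : ℤ) : 0 ≤ normForm x y := by
  nlinarith [four_mul_normForm x y]

/-- The polarization of `normForm`: the trace of `(a - bω)` times the conjugate of `(x - yω)`. -/
def polarForm (a b x y : ℤ) : ℤ := 2 * a * x + a * y + b * x + 2 * b * y

lemma normForm_add_mul (a b x y q : ℤ) : normForm (a + q * x) (b + q * y) =
    normForm a b + q * polarForm a b x y + q ^ 2 * normForm x y := by
  rw [normForm, normForm, normForm, polarForm]
  ring

lemma polarForm_add_mul (a b x y q : ℤ) : polarForm (a + q * x) (b + q * y) x y =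
    polarForm a b x y + 2 * q * normForm x y := by
  rw [polarForm, polarForm, normForm]
  ring

lemma four_mul_normForm_mul_normForm (a b x y : ℤ) :
    4 * normForm x y * normForm a b = polarForm a b x y ^ 2 + 3 * (a * y - b * x) ^ 2 := by
  rw [normForm, normForm, polarForm]
  ring

lemma exists_add_mul_mem_Ico {m : ℤ} (hm : 0 < m) (t c : ℤ) :
    ∃ k, t + m * k ∈ Set.Ico c (c + m) := by
  obtain ⟨k, hk, -⟩ := existsUnique_add_zsmul_mem_Ico hm t c
  exact ⟨k, by simpa [mul_comm] using hk⟩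

lemma exists_two_mul_abs_add_mul_le {m : ℤ} (hm : 0 < m) (t : ℤ) : ∃ k, 2 * |t + m * k| ≤ m := by
  obtain ⟨k, hk₁, hk₂⟩ := exists_add_mul_mem_Ico hm t (-(m / 2))
  have habs : |t + m * k| ≤ m / 2 := abs_le.2 ⟨hk₁, by lia⟩
  exact ⟨k, by lia⟩

/-- The vector `(x + 2y, -2x - y)` is `√-3` times `(x, y)` up to sign; it is orthogonal to `(x, y)`
and has norm `3 * normForm x y`, so moving `r` times it along `(q x, q y)` and along the lattice
`q²` does not change the norm modulo `q²`. The component along `(x, y)` can be put in any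
window of length `2 * q * normForm x y`, the orthogonal one is at most `q² / 2`. -/
lemma exists_modEq_polarForm_mem_Ico {x y q : ℤ} (hxy : IsCoprime x y) (hN : 0 < normForm x y)
    (hq : 0 < q) (r τ₀ : ℤ) :
    ∃ a b : ℤ, a ≡ r * (x + 2 * y) [ZMOD q] ∧ b ≡ -r * (2 * x + y) [ZMOD q] ∧
      normForm a b ≡ 3 * r ^ 2 * normForm x y [ZMOD q ^ 2] ∧
      (∃ τ ∈ Set.Ico τ₀ (τ₀ + 2 * normForm x y), polarForm a b x y = q * τ) ∧
      2 * |a * y - b * x| ≤ q ^ 2 := by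
  obtain ⟨s, t, hst⟩ := hxy
  obtain ⟨g, hg⟩ := exists_two_mul_abs_add_mul_le (pow_pos hq 2) (2 * r * normForm x y)
  obtain ⟨k, hk⟩ := exists_add_mul_mem_Ico (mul_pos two_pos hN)
    (q * g * (t * (2 * x + y) - s * (x + 2 * y))) τ₀
  refine ⟨r * (x + 2 * y) + q * k * x + q ^ 2 * g * t,
    -r * (2 * x + y) + q * k * y - q ^ 2 * g * s, ?_, ?_, ?_, ⟨_, hk, ?_⟩, ?_⟩
  · exact (Int.modEq_iff_dvd.2 ⟨k * x + q * g * t, by ring⟩).symm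
  · exact (Int.modEq_iff_dvd.2 ⟨k * y - q * g * s, by ring⟩).symm
  · refine (Int.modEq_iff_dvd.2 ⟨k ^ 2 * normForm x y
      + g * polarForm (r * (x + 2 * y) + q * k * x) (-r * (2 * x + y) + q * k * y) t (-s)
      + q ^ 2 * g ^ 2 * normForm t (-s), ?_⟩).symm
    simp only [normForm, polarForm]
    ring
  · simp only [normForm, polarForm]
    ring
  · convert hg using 3
    rw [normForm]
    linear_combination q ^ 2 * g * hst

lemma normForm_le_of_polarForm_le {a b x y q K : ℤ} (hK : |polarForm a b x y| ≤ q * K)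
    (hC : 2 * |a * y - b * x| ≤ q ^ 2) :
    16 * normForm x y * normForm a b ≤ q ^ 2 * (4 * K ^ 2 + 3 * q ^ 2) := by
  have hpolar : polarForm a b x y ^ 2 ≤ (q * K) ^ 2 := sq_le_sq' (abs_le.1 hK).1 (abs_le.1 hK).2
  have hcross : (2 * |a * y - b * x|) ^ 2 ≤ (q ^ 2) ^ 2 := pow_le_pow_left₀ (by positivity) hC 2
  rw [mul_pow, sq_abs] at hcross
  linarith [four_mul_normForm_mul_normForm a b x y]

/-- Every element of the Eisenstein lattice off three lines has an associate or conjugate of an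
associate in a given sector of angle `π / 6`. -/
lemma exists_nat_normForm_eq {a b : ℤ} (ha : a ≠ 0) (hb : b ≠ 0) (hab : a + b ≠ 0) :
    ∃ a' b' : ℕ, 0 < a' ∧ a' ≤ b' ∧ normForm a' b' = normForm a b := by
  suffices h : ∃ u v : ℤ, 0 < u ∧ 0 < v ∧ normForm u v = normForm a b by
    obtain ⟨u, v, hu, hv, huv⟩ := h
    lift u to ℕ using hu.le
    lift v to ℕ using hv.le
    rcases le_total u v with h | h
    · exact ⟨u, v, by lia, h, huv⟩
    · exact ⟨v, u, by lia, h, by rw [← huv, normForm, normForm]; ring⟩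
  have hrot : normForm (a + b) (-b) = normForm a b ∧ normForm (a + b) (-a) = normForm a b ∧
      normForm (-a) (-b) = normForm a b ∧ normForm (-(a + b)) b = normForm a b ∧
      normForm (-(a + b)) a = normForm a b := by
    simp only [normForm]
    refine ⟨?_, ?_, ?_, ?_, ?_⟩ <;> ring
  obtain ⟨h₁, h₂, h₃, h₄, h₅⟩ := hrot
  rcases ha.lt_or_gt with ha | ha <;> rcases hb.lt_or_gt with hb | hb <;>
    rcases hab.lt_or_gt with hab | hab
  · exact ⟨_, _, by lia, by lia, h₃⟩
  · lia
  · exact ⟨_, _, by lia, by lia, h₄⟩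
  · exact ⟨_, _, by lia, by lia, h₂⟩
  · exact ⟨_, _, by lia, by lia, h₅⟩
  · exact ⟨_, _, by lia, by lia, h₁⟩
  · lia
  · exact ⟨_, _, ha, hb, rfl⟩

lemma hasCollision_of_dvd_normForm {q m a b : ℕ} (hm : 0 < m) (ha : 0 < a) (hab : a < b)
    (h : (q : ℤ) ^ 2 ∣ m ^ 4 * normForm a b + 1) : HasCollision (q * m) (m ^ 2 * b) := by
  have hm2 : 0 < m ^ 2 := by positivity
  refine ⟨m ^ 2 * a, m ^ 2 * b, Nat.mul_pos hm2 ha, Nat.mul_lt_mul_of_pos_left hab hm2,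
    le_rfl, ?_⟩
  rw [cube_add_self_modEq_iff]
  obtain ⟨w, hw⟩ := h
  refine ⟨(b - a) * w, ?_⟩
  rw [normForm] at hw ⊢
  push_cast
  linear_combination (m : ℤ) ^ 2 * (b - a) * hw

/-! ### A short vector whose norm is not a square -/

lemma isSquare_mul_iff_of_finite {F : Type*} [Field F] [Finite F] {a b : F} (ha : a ≠ 0)
    (hb : b ≠ 0) : IsSquare (a * b) ↔ (IsSquare a ↔ IsSquare b) := by
  classical
  have := Fintype.ofFinite F
  rw [← quadraticChar_one_iff_isSquare ha, ← quadraticChar_one_iff_isSquare hb,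
    ← quadraticChar_one_iff_isSquare (mul_ne_zero ha hb), map_mul]
  rcases quadraticChar_dichotomy ha with h | h <;>
    rcases quadraticChar_dichotomy hb with h' | h' <;>
    simp [h, h']

lemma five_le_of_not_isSquare_neg_three {p : ℕ} (hp : p.Prime) (hns : ¬ IsSquare (-3 : ZMod p)) :
    5 ≤ p := by
  by_contra! hlt
  have h2 : IsSquare (-3 : ZMod 2) := ⟨1, by decide⟩
  have h3 : IsSquare (-3 : ZMod 3) := ⟨0, by decide⟩
  interval_cases p <;> contradiction

lemma ne_zero_of_not_isSquare {F : Type*} [MulZeroClass F] {a : F} (ha : ¬ IsSquare a) : a ≠ 0 := by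
  rintro rfl
  exact ha .zero

lemma exists_not_isSquare_sq_add_add_one {F : Type*} [Field F] [Finite F] (h2 : (2 : F) ≠ 0)
    (h3 : (3 : F) ≠ 0) : ∃ κ : F, ¬ IsSquare (κ ^ 2 + κ + 1) := by
  have := Fintype.ofFinite F
  have hchar : ringChar F ≠ 2 := fun h =>
    h2 (by exact_mod_cast h ▸ CharP.cast_eq_zero F (ringChar F))
  obtain ⟨ν, hν⟩ := FiniteField.exists_nonsquare hchar
  obtain ⟨a, b, hab⟩ := FiniteField.exists_root_sum_quadratic
    (degree_X_pow_sub_C two_pos (4 * ν)) (degree_C_mul_X_pow 2 h3)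
    (FiniteField.odd_card_of_char_ne_two hchar)
  simp only [eval_sub, eval_mul, eval_pow, eval_X, eval_C] at hab
  have hb : b ≠ 0 := by
    rintro rfl
    exact hν ⟨a / 2, by field_simp; linear_combination -hab⟩
  refine ⟨(a - b) / (2 * b), fun ⟨s, hs⟩ => hν ⟨s * b, ?_⟩⟩
  field_simp at hs
  refine mul_left_cancel₀ (mul_ne_zero h2 h2) ?_
  linear_combination hs - hab

lemma exists_abs_le_sqrt_dvd_sub_mul {p : ℕ} (hp : 0 < p) (κ : ℤ) :
    ∃ u v : ℤ, 0 < u ∧ u ≤ p.sqrt ∧ |v| ≤ p.sqrt ∧ (p : ℤ) ∣ v - κ * u := by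
  obtain ⟨j, k, hk, hkn, h⟩ :=
    Real.exists_int_int_abs_mul_sub_le ((κ : ℝ) / p) (Nat.sqrt_pos.2 hp)
  refine ⟨k, k * κ - j * p, hk, hkn, ?_, ⟨-j, by ring⟩⟩
  have hpr : (0 : ℝ) < p := by exact_mod_cast hp
  have hsqrt : (p : ℝ) < (p.sqrt + 1) * (p.sqrt + 1) := by exact_mod_cast p.lt_succ_sqrt
  have hlt : |(k : ℝ) * κ - j * p| < p.sqrt + 1 :=
    calc |(k : ℝ) * κ - j * p| = |(k : ℝ) * (κ / p) - j| * p := by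
          nth_rw 3 [← abs_of_pos hpr]
          rw [← abs_mul]
          congr 1
          field_simp
      _ ≤ 1 / (p.sqrt + 1) * p := by gcongr
      _ < p.sqrt + 1 := by rwa [one_div, inv_mul_lt_iff₀ (by positivity)]
  exact Int.lt_add_one_iff.1 (by exact_mod_cast hlt)

lemma exists_isCoprime_not_isSquare_normForm {p : ℕ} [Fact p.Prime] (hp5 : 5 ≤ p) :
    ∃ x y : ℤ, IsCoprime x y ∧ |x| ≤ p.sqrt ∧ |y| ≤ p.sqrt ∧
      ¬ IsSquare (normForm x y : ZMod p) := by
  have h2 : (2 : ZMod p) ≠ 0 := Ring.two_ne_zero (by rw [ringChar.eq (ZMod p) p]; lia)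
  have h3 : (3 : ZMod p) ≠ 0 := by
    exact_mod_cast mt (ZMod.intCast_zmod_eq_zero_iff_dvd 3 p).1 (not_natCast_dvd_three hp5)
  obtain ⟨κ, hκ⟩ := exists_not_isSquare_sq_add_add_one h2 h3
  obtain ⟨κ, rfl⟩ := ZMod.intCast_surjective κ
  obtain ⟨u, v, hu, hup, hvp, hdvd⟩ := exists_abs_le_sqrt_dvd_sub_mul (NeZero.pos p) κ
  have hvu : (v : ZMod p) = κ * u := by
    rw [← sub_eq_zero]
    exact_mod_cast (ZMod.intCast_zmod_eq_zero_iff_dvd _ p).2 hdvd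
  have hu0 : (u : ZMod p) ≠ 0 := fun h => by
    have := Int.le_of_dvd hu ((ZMod.intCast_zmod_eq_zero_iff_dvd u p).1 h)
    have := Nat.sqrt_lt_self (show 1 < p by lia)
    lia
  rw [← abs_of_pos hu] at hup
  obtain ⟨g, x, y, hg, hxy, rfl, rfl⟩ := Int.exists_gcd_one' (Int.gcd_pos_of_ne_zero_right v hu.ne')
  rw [abs_mul, Nat.abs_cast] at hup hvp
  refine ⟨x, y, Int.isCoprime_iff_gcd_eq_one.2 hxy, by nlinarith [abs_nonneg x],
    by nlinarith [abs_nonneg y], fun ⟨s, hs⟩ => hκ ⟨s / y, ?_⟩⟩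
  push_cast at hvu hu0
  have hxy' : (x : ZMod p) = κ * y :=
    mul_right_cancel₀ (right_ne_zero_of_mul hu0) (by linear_combination hvu)
  have hy0 : (y : ZMod p) ≠ 0 := left_ne_zero_of_mul hu0
  rw [normForm] at hs
  push_cast at hs
  rw [hxy'] at hs
  field_simp
  linear_combination hs

lemma normForm_eq_three_of_isCoprime {x y : ℤ} (hxy : IsCoprime x y)
    (h : x + 2 * y = 0 ∨ 2 * x + y = 0 ∨ y - x = 0) : normForm x y = 3 := by
  have hcases : (x + 2 * y = 0 ∧ IsUnit y) ∨ (2 * x + y = 0 ∧ IsUnit x) ∨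
      (y - x = 0 ∧ IsUnit x) := by
    rcases h with h | h | h
    · exact .inl ⟨h, hxy.isUnit_of_dvd' ⟨-2, by lia⟩ dvd_rfl⟩
    · exact .inr (.inl ⟨h, hxy.isUnit_of_dvd' dvd_rfl ⟨-2, by lia⟩⟩)
    · exact .inr (.inr ⟨h, hxy.isUnit_of_dvd' dvd_rfl ⟨1, by lia⟩⟩)
  simp only [Int.isUnit_iff] at hcases
  have : (x = -2 * y ∧ (y = 1 ∨ y = -1)) ∨ (y = -2 * x ∧ (x = 1 ∨ x = -1)) ∨
      (y = x ∧ (x = 1 ∨ x = -1)) := by lia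
  rcases this with ⟨rfl, rfl | rfl⟩ | ⟨rfl, rfl | rfl⟩ | ⟨rfl, rfl | rfl⟩ <;> rfl

lemma exists_normForm_eq_sq_mul_of_lt_nineteen {x y : ℤ} (h : normForm x y < 19) :
    ∃ c ∈ ({1, 3, 7, 13} : Finset ℤ), ∃ s ∈ Finset.Icc (0 : ℤ) 4, normForm x y = s ^ 2 * c := by
  have hbound {x y : ℤ} (h : normForm x y < 19) : y ∈ Finset.Icc (-4 : ℤ) 4 := by
    have := four_mul_normForm x y
    exact Finset.mem_Icc.2 (by constructor <;> nlinarith)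
  have hx : x ∈ Finset.Icc (-4 : ℤ) 4 := by
    refine hbound (x := y) ?_
    convert h using 1
    rw [normForm, normForm]
    ring
  have hall : ∀ x ∈ Finset.Icc (-4 : ℤ) 4, ∀ y ∈ Finset.Icc (-4 : ℤ) 4, normForm x y < 19 →
      ∃ c ∈ ({1, 3, 7, 13} : Finset ℤ), ∃ s ∈ Finset.Icc (0 : ℤ) 4, normForm x y = s ^ 2 * c := by
    decide +kernel
  exact hall x hx y (hbound h) h

lemma not_isSquare_of_normForm_lt_nineteen {R : Type*} [CommRing R] {x y : ℤ}
    (h : normForm x y < 19) (hN : ¬ IsSquare (normForm x y : R)) :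
    ¬ IsSquare (3 : R) ∨ ¬ IsSquare (7 : R) ∨ ¬ IsSquare (13 : R) := by
  obtain ⟨c, hc, s, -, hs⟩ := exists_normForm_eq_sq_mul_of_lt_nineteen h
  contrapose! hN
  obtain ⟨h3, h7, h13⟩ := hN
  have hcsq : IsSquare (c : R) := by
    simp only [Finset.mem_insert, Finset.mem_singleton] at hc
    rcases hc with rfl | rfl | rfl | rfl
    · simp
    · exact_mod_cast h3
    · exact_mod_cast h7
    · exact_mod_cast h13
  rw [hs]
  push_cast
  exact (IsSquare.sq _).mul hcsq

-- `19`, `57 = 3 * 19`, `21 = 3 * 7` and `39 = 3 * 13` are norms of coprime pairs; as `-3` is a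
-- square modulo `19`, the prime `p` is not `19`.
lemma exists_mem_not_isSquare_normForm {p : ℕ} [Fact p.Prime]
    (hns : ¬ IsSquare (-3 : ZMod p))
    (h : ¬ IsSquare (3 : ZMod p) ∨ ¬ IsSquare (7 : ZMod p) ∨ ¬ IsSquare (13 : ZMod p)) :
    ∃ v ∈ ({(3, 2), (7, 1), (4, 1), (5, 2)} : Finset (ℤ × ℤ)),
      ¬ IsSquare (normForm v.1 v.2 : ZMod p) := by
  have hpr : p.Prime := Fact.out
  have hsq : IsSquare (-3 : ZMod 19) := ⟨4, by decide⟩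
  have h3 : (3 : ZMod p) ≠ 0 := by
    exact_mod_cast mt (ZMod.intCast_zmod_eq_zero_iff_dvd 3 p).1 
      (not_natCast_dvd_three (five_le_of_not_isSquare_neg_three hpr hns))
  have h19 : (19 : ZMod p) ≠ 0 := by
    intro h0
    have : p ∣ 19 := (ZMod.natCast_eq_zero_iff 19 p).1 (by exact_mod_cast h0)
    obtain rfl := (Nat.prime_dvd_prime_iff_eq hpr (by norm_num)).1 this
    exact hns hsq
  by_contra! hall
  simp only [Finset.mem_insert, Finset.mem_singleton, forall_eq_or_imp, forall_eq] at hall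
  obtain ⟨s19, s57, s21, s39⟩ := hall
  norm_num [normForm] at s19 s57 s21 s39
  rw [show (57 : ZMod p) = 3 * 19 by norm_num, isSquare_mul_iff_of_finite h3 h19] at s57
  have s3 := s57.2 s19
  rcases h with h | h | h
  · exact h s3
  · rw [show (21 : ZMod p) = 3 * 7 by norm_num,
      isSquare_mul_iff_of_finite h3 (ne_zero_of_not_isSquare h)] at s21
    exact h (s21.1 s3)
  · rw [show (39 : ZMod p) = 3 * 13 by norm_num,
      isSquare_mul_iff_of_finite h3 (ne_zero_of_not_isSquare h)] at s39
    exact h (s39.1 s3)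

lemma exists_nineteen_le_normForm_le {p : ℕ} [Fact p.Prime] (hp : 11 ≤ p)
    (hns : ¬ IsSquare (-3 : ZMod p)) :
    ∃ x y : ℤ, IsCoprime x y ∧ ¬ IsSquare (normForm x y : ZMod p) ∧ 19 ≤ normForm x y ∧
      normForm x y ≤ max 57 (3 * (p : ℤ)) ∧ ¬ (p : ℤ) ∣ x + 2 * y ∧ ¬ (p : ℤ) ∣ 2 * x + y ∧
      ¬ (p : ℤ) ∣ y - x := by
  obtain ⟨x, y, hxy, hx, hy, hN⟩ := exists_isCoprime_not_isSquare_normForm (p := p) (by lia)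
  rcases lt_or_ge (normForm x y) 19 with hlt | hge
  · obtain ⟨v, hv, hvN⟩ := exists_mem_not_isSquare_normForm hns
      (not_isSquare_of_normForm_lt_nineteen hlt hN)
    have hdvd {z : ℤ} (hz : z ∣ (Nat.factorial 7 : ℕ)) : ¬ (p : ℤ) ∣ z := fun h => by
      have := (Nat.Prime.dvd_factorial Fact.out).1 (Int.natCast_dvd_natCast.1 (h.trans hz))
      lia
    have hall : ∀ v ∈ ({(3, 2), (7, 1), (4, 1), (5, 2)} : Finset (ℤ × ℤ)), Int.gcd v.1 v.2 = 1 ∧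
        19 ≤ normForm v.1 v.2 ∧ normForm v.1 v.2 ≤ 57 ∧ v.1 + 2 * v.2 ∣ (Nat.factorial 7 : ℕ) ∧
        2 * v.1 + v.2 ∣ (Nat.factorial 7 : ℕ) ∧ v.2 - v.1 ∣ (Nat.factorial 7 : ℕ) := by
      decide +kernel
    obtain ⟨hgcd, hlo, hhi, h₁, h₂, h₃⟩ := hall v hv
    exact ⟨v.1, v.2, Int.isCoprime_iff_gcd_eq_one.2 hgcd, hvN, hlo, le_max_of_le_left hhi,
      hdvd h₁, hdvd h₂, hdvd h₃⟩
  · have hsqrt : (p.sqrt : ℤ) * p.sqrt ≤ p := by exact_mod_cast p.sqrt_le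
    rw [abs_le] at hx hy
    have hdvd {z : ℤ} (hz : |z| ≤ 3 * p.sqrt) (hz0 : z ≠ 0) : ¬ (p : ℤ) ∣ z := fun h => by
      have := Int.le_of_dvd (abs_pos.2 hz0) ((dvd_abs _ _).2 h)
      nlinarith
    have hne : x + 2 * y ≠ 0 ∧ 2 * x + y ≠ 0 ∧ y - x ≠ 0 := by
      by_contra! h
      have := normForm_eq_three_of_isCoprime hxy (by tauto)
      lia
    refine ⟨x, y, hxy, hN, hge, le_max_of_le_right ?_, hdvd (abs_le.2 ⟨by lia, by lia⟩) hne.1,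
      hdvd (abs_le.2 ⟨by lia, by lia⟩) hne.2.1, hdvd (abs_le.2 ⟨by lia, by lia⟩) hne.2.2⟩
    rw [normForm]
    nlinarith [sq_nonneg (x - y)]

/-! ### Prime powers modulo which `-3` is not a square -/

lemma hasCollision_of_normForm_le {p q m : ℕ} {a b : ℤ} (hpq : p ∣ q)
    (hns : ¬ IsSquare (-3 : ZMod p)) (hm : 0 < m)
    (ha : a ≠ 0) (hb : b ≠ 0) (hab : a + b ≠ 0)
    (hdvd : (q : ℤ) ^ 2 ∣ m ^ 4 * normForm a b + 1) (hle : 81 * normForm a b ≤ q ^ 4) :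
    HasCollision (q * m) (9 ^ Nat.log 3 (q * m) + 1) := by
  obtain ⟨u, v, hu, huv, heq⟩ := exists_nat_normForm_eq ha hb hab
  rw [← heq] at hdvd hle
  have hne : u ≠ v := by
    rintro rfl
    refine hns ⟨3 * m ^ 2 * u, ?_⟩
    have hp : ((m ^ 4 * normForm u u + 1 : ℤ) : ZMod p) = 0 := by
      rw [ZMod.intCast_zmod_eq_zero_iff_dvd]
      exact (dvd_pow (Int.natCast_dvd_natCast.2 hpq) two_ne_zero).trans hdvd
    rw [normForm] at hp
    push_cast at hp
    linear_combination -3 * hp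
  refine (hasCollision_of_dvd_normForm hm hu (by lia) hdvd).of_nine_mul_le ?_
  have hv : 9 * v ≤ q ^ 2 := by
    have hsq : (9 * v : ℤ) ^ 2 ≤ ((q : ℤ) ^ 2) ^ 2 := by
      have : (0 : ℤ) ≤ u ^ 2 + u * v := by positivity
      rw [normForm] at hle
      linarith
    exact_mod_cast abs_le_of_sq_le_sq' hsq (by positivity) |>.2
  nlinarith

-- `-3 m⁴ normForm x y` is a square as a product of two nonsquares, which provides `r`.
lemma exists_normForm_modEq_of_not_isSquare {p m : ℕ} [Fact p.Prime] (hm : ¬ p ∣ m)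
    (hns : ¬ IsSquare (-3 : ZMod p)) {x y : ℤ} (hxy : IsCoprime x y)
    (hN : ¬ IsSquare (normForm x y : ZMod p)) (j : ℕ) (τ₀ : ℤ) :
    ∃ r a b : ℤ, ¬ (p : ℤ) ∣ r ∧ a ≡ r * (x + 2 * y) [ZMOD p] ∧ b ≡ -r * (2 * x + y) [ZMOD p] ∧
      ((p : ℤ) ^ (j + 1)) ^ 2 ∣ m ^ 4 * normForm a b + 1 ∧
      (∃ τ ∈ Set.Ico τ₀ (τ₀ + 2 * normForm x y), polarForm a b x y = p ^ (j + 1) * τ) ∧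
      2 * |a * y - b * x| ≤ ((p : ℤ) ^ (j + 1)) ^ 2 := by
  have hN0 := ne_zero_of_not_isSquare hN
  have hm0 : (m : ZMod p) ≠ 0 := mt (ZMod.natCast_eq_zero_iff m p).1 hm
  have h3 : (-3 : ZMod p) ≠ 0 := ne_zero_of_not_isSquare hns
  have hA : ((-(3 * m ^ 4 * normForm x y) : ℤ) : ZMod p) = -3 * normForm x y * (m ^ 2 * m ^ 2) := by
    push_cast
    ring
  have hp5 := five_le_of_not_isSquare_neg_three Fact.out hns
  obtain ⟨r, -, -, hr⟩ := exists_nat_prime_pow_dvd_mul_sq_add_one (p := p) (by lia)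
    (A := 3 * m ^ 4 * normForm x y)
    (by
      rw [hA]
      exact ((isSquare_mul_iff_of_finite h3 hN0).2 (iff_of_false hns hN)).mul (.mul_self _))
    (by
      rw [← ZMod.intCast_zmod_eq_zero_iff_dvd, ← neg_eq_zero, ← Int.cast_neg, hA]
      positivity) (2 * (j + 1))
  have hpr : ¬ (p : ℤ) ∣ r := fun h =>
    (Nat.prime_iff_prime_int.1 Fact.out).not_dvd_one <| (Int.dvd_add_right
      ((dvd_pow h two_ne_zero).mul_left _)).1 ((dvd_pow_self _ (by lia)).trans hr)
  have hNpos : 0 < normForm x y := (normForm_nonneg x y).lt_of_ne fun h => hN0 (by simp [← h])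
  obtain ⟨a, b, ha, hb, hnorm, hτ, hcross⟩ := exists_modEq_polarForm_mem_Ico hxy hNpos
    (pow_pos (Int.natCast_pos.2 (Nat.pos_of_neZero p)) (j + 1)) r τ₀
  have hpq : (p : ℤ) ∣ p ^ (j + 1) := dvd_pow_self _ j.succ_ne_zero
  refine ⟨r, a, b, hpr, ha.of_dvd hpq, hb.of_dvd hpq, ?_, hτ, hcross⟩
  rw [← Int.modEq_zero_iff_dvd]
  calc m ^ 4 * normForm a b + 1 ≡ m ^ 4 * (3 * r ^ 2 * normForm x y) + 1
        [ZMOD ((p : ℤ) ^ (j + 1)) ^ 2] := (hnorm.mul_left _).add_right 1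
    _ ≡ 0 [ZMOD ((p : ℤ) ^ (j + 1)) ^ 2] := by
      rw [Int.modEq_zero_iff_dvd, ← pow_mul, mul_comm (j + 1)]
      convert hr using 1
      ring

lemma ne_zero_of_modEq_mul {p r s a : ℤ} (hp : Prime p) (h : a ≡ r * s [ZMOD p]) (hr : ¬ p ∣ r)
    (hs : ¬ p ∣ s) : a ≠ 0 := by
  rintro rfl
  exact (hp.dvd_or_dvd (Int.modEq_zero_iff_dvd.1 h.symm)).elim hr hs

lemma normForm_le_of_polarForm_le_normForm {a b x y q : ℤ} (hq : 67 ≤ q)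
    (hlo : 19 ≤ normForm x y) (hhi : normForm x y ≤ 3 * q)
    (hpolar : |polarForm a b x y| ≤ q * normForm x y) (hcross : 2 * |a * y - b * x| ≤ q ^ 2) :
    81 * normForm a b ≤ q ^ 4 := by
  have hbound := normForm_le_of_polarForm_le hpolar hcross
  generalize normForm x y = N at *
  -- the difference is a concave function of `N`, nonnegative for `N = 19` and `N = 3 * q`; the
  -- latter amounts to `66 ≤ q`
  have hconcave : 81 * (4 * N ^ 2 + 3 * q ^ 2) ≤ 16 * N * q ^ 2 := by
    nlinarith [mul_nonneg (sub_nonneg.2 hlo) (sub_nonneg.2 hhi), mul_nonneg (sub_nonneg.2 hlo)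
      (show 0 ≤ 16 * q ^ 2 - 972 * q - 6156 by nlinarith)]
  refine le_of_mul_le_mul_left ?_ (show 0 < 16 * N by lia)
  nlinarith [mul_le_mul_of_nonneg_left hconcave (sq_nonneg q)]

lemma hasCollision_of_not_isSquare_normForm {p j m : ℕ} [Fact p.Prime]
    (hq : 67 ≤ p ^ (j + 1)) (hm : ¬ p ∣ m) (hns : ¬ IsSquare (-3 : ZMod p)) {x y : ℤ}
    (hxy : IsCoprime x y) (hN : ¬ IsSquare (normForm x y : ZMod p)) (hlo : 19 ≤ normForm x y)
    (hhi : normForm x y ≤ 3 * p ^ (j + 1)) (h₁ : ¬ (p : ℤ) ∣ x + 2 * y)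
    (h₂ : ¬ (p : ℤ) ∣ 2 * x + y) (h₃ : ¬ (p : ℤ) ∣ y - x) :
    HasCollision (p ^ (j + 1) * m) (9 ^ Nat.log 3 (p ^ (j + 1) * m) + 1) := by
  have hp : Prime (p : ℤ) := Nat.prime_iff_prime_int.1 Fact.out
  obtain ⟨r, a, b, hr, ha, hb, hdvd, ⟨τ, ⟨hτ₁, hτ₂⟩, hpolar⟩, hcross⟩ :=
    exists_normForm_modEq_of_not_isSquare hm hns hxy hN j (-normForm x y)
  have hab : a + b ≡ r * (y - x) [ZMOD p] := by
    convert ha.add hb using 1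
    ring
  refine hasCollision_of_normForm_le (dvd_pow_self p j.succ_ne_zero) hns
    (Nat.pos_of_ne_zero fun h => hm (h ▸ dvd_zero p)) (ne_zero_of_modEq_mul hp ha hr h₁)
    (ne_zero_of_modEq_mul hp (r := -r) hb (by rwa [dvd_neg]) h₂) (ne_zero_of_modEq_mul hp hab hr h₃)
    (by exact_mod_cast hdvd) ?_
  rw [Nat.cast_pow]
  refine normForm_le_of_polarForm_le_normForm (by exact_mod_cast hq) hlo hhi ?_ hcross
  rw [hpolar, abs_mul, abs_of_nonneg (by positivity)]
  gcongr
  exact abs_le.2 ⟨hτ₁, by lia⟩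

lemma normForm_le_of_polarForm_seven_one {a b q : ℤ} (hq : 80 ≤ q)
    (hpolar : |polarForm a b 7 1| ≤ q * 114) (hcross : 2 * |a * 1 - b * 7| ≤ q ^ 2) :
    81 * normForm a b ≤ q ^ 4 := by
  have hbound := normForm_le_of_polarForm_le hpolar hcross
  rw [show normForm 7 1 = 57 from rfl] at hbound
  nlinarith [mul_le_mul_of_nonneg_left (pow_le_pow_left₀ (by norm_num) hq 2) (sq_nonneg q)]

-- `5` divides `2 * 7 + 1`, so that `b` may vanish. The window for `polarForm` is chosen so that
-- translating by `q * (7, 1)` reflects it.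
lemma exists_normForm_modEq_five {m : ℕ} (hm : ¬ 5 ∣ m) (j : ℕ) :
    ∃ a b : ℤ, a ≠ 0 ∧ b ≠ 0 ∧ a + b ≠ 0 ∧ (5 ^ (j + 1)) ^ 2 ∣ m ^ 4 * normForm a b + 1 ∧
      |polarForm a b 7 1| ≤ 5 ^ (j + 1) * 114 ∧ 2 * |a * 1 - b * 7| ≤ (5 ^ (j + 1)) ^ 2 := by
  have hN : normForm 7 1 = 57 := rfl
  have hNns : ¬ IsSquare (normForm 7 1 : ZMod 5) := by decide
  have hns : ¬ IsSquare (-3 : ZMod 5) := by decide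
  have : Fact (Nat.Prime 5) := ⟨Nat.prime_five⟩
  have hp : Prime (5 : ℤ) := Int.prime_iff_natAbs_prime.2 Nat.prime_five
  obtain ⟨r, a, b, hr, ha, hb, hdvd, ⟨τ, ⟨hτ₁, hτ₂⟩, hpolar⟩, hcross⟩ :=
    exists_normForm_modEq_of_not_isSquare (p := 5) hm hns isCoprime_one_right hNns j (-114)
  rw [hN] at hτ₂
  push_cast at hr ha hb hdvd hpolar hcross
  have hab : a + b ≡ r * (-6) [ZMOD 5] := by
    convert ha.add hb using 1
    ring
  have hpq : (5 : ℤ) ∣ 5 ^ (j + 1) := dvd_pow_self 5 j.succ_ne_zero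
  have hq : (0 : ℤ) < 5 ^ (j + 1) := by positivity
  generalize (5 : ℤ) ^ (j + 1) = q at *
  rcases ne_or_eq b 0 with hb0 | rfl
  · refine ⟨a, b, ne_zero_of_modEq_mul hp ha hr (by norm_num), hb0,
      ne_zero_of_modEq_mul hp hab hr (by norm_num), hdvd, ?_, hcross⟩
    rw [hpolar, abs_mul, abs_of_pos hq]
    gcongr
    exact abs_le.2 ⟨hτ₁, by lia⟩
  · have ha5 : ¬ 5 ∣ a := fun h => (hp.dvd_or_dvd (Int.modEq_zero_iff_dvd.1
      (ha.symm.trans (Int.modEq_zero_iff_dvd.2 h)))).elim hr (by norm_num)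
    refine ⟨a + q * 7, 0 + q * 1, by lia, by lia, by lia, ?_, ?_, ?_⟩
    · rw [normForm_add_mul, hpolar, hN, ← mul_assoc, ← sq, add_assoc, ← mul_add, mul_add,
        add_right_comm]
      exact dvd_add hdvd ((Dvd.intro _ rfl).mul_left _)
    · rw [polarForm_add_mul, hpolar, hN, show q * τ + 2 * q * 57 = q * (τ + 114) by ring, abs_mul,
        abs_of_pos hq]
      gcongr
      exact abs_le.2 ⟨by lia, by lia⟩
    · convert hcross using 3
      ring

lemma hasCollision_five_pow_mul {j m : ℕ} (hj : 2 ≤ j) (hm : ¬ 5 ∣ m) :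
    HasCollision (5 ^ (j + 1) * m) (9 ^ Nat.log 3 (5 ^ (j + 1) * m) + 1) := by
  obtain ⟨a, b, ha, hb, hab, hdvd, hpolar, hcross⟩ := exists_normForm_modEq_five hm j
  have hq : (80 : ℤ) ≤ 5 ^ (j + 1) :=
    (show (80 : ℤ) ≤ 5 ^ 3 by norm_num).trans (pow_le_pow_right₀ (by norm_num) (by lia))
  exact hasCollision_of_normForm_le (p := 5) (dvd_pow_self 5 j.succ_ne_zero) (by decide)
    (Nat.pos_of_ne_zero fun h => hm (h ▸ dvd_zero 5)) ha hb hab (by exact_mod_cast hdvd)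
    (by exact_mod_cast normForm_le_of_polarForm_seven_one hq hpolar hcross)

lemma hasCollision_prime_pow_mul_of_sixtySeven_le {p j m : ℕ} (hp : p.Prime) (hp5 : 5 ≤ p)
    (hq : 67 ≤ p ^ (j + 1)) (hm : ¬ p ∣ m) :
    HasCollision (p ^ (j + 1) * m) (9 ^ Nat.log 3 (p ^ (j + 1) * m) + 1) := by
  have : Fact p.Prime := ⟨hp⟩
  have h7 : IsSquare (-3 : ZMod 7) := ⟨2, by decide⟩
  by_cases hsq : IsSquare (-3 : ZMod p)
  · exact hasCollision_of_isSquare_neg_three hp5 (by lia)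
      (Nat.pos_of_ne_zero fun h => hm (h ▸ dvd_zero p)) hsq
  obtain rfl | hp11 : p = 5 ∨ 11 ≤ p := by
    by_contra! h
    have : p ∈ Finset.Ico 6 11 := by simp; lia
    fin_cases this
    · revert hp; norm_num
    · exact hsq h7
    all_goals revert hp; norm_num
  · refine hasCollision_five_pow_mul ?_ hm
    by_contra! h
    interval_cases j <;> lia
  · obtain ⟨x, y, hxy, hN, hlo, hhi, h₁, h₂, h₃⟩ := exists_nineteen_le_normForm_le hp11 hsq
    refine hasCollision_of_not_isSquare_normForm hq hm hsq hxy hN hlo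
      (hhi.trans (max_le ?_ ?_)) h₁ h₂ h₃
    · have : (67 : ℤ) ≤ p ^ (j + 1) := by exact_mod_cast hq
      lia
    · gcongr
      exact_mod_cast Nat.le_self_pow j.succ_ne_zero p

/-! ### Small prime powers -/

/-- Triples `(m, a, d)`, found by computer search, such that `a` and `a + d` exhibit a collision
modulo `m²`. They cover the moduli `m` with a small prime power factor for which
`hasCollision_of_dvd_conic` is too weak. -/
def smallCollisions : List (ℕ × ℕ × ℕ) :=
  [(5, 3, 2), (7, 3, 5), (10, 3, 2), (11, 1, 14), (13, 8, 5), (14, 3, 7), (15, 7, 18),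
   (17, 8, 11), (19, 15, 1), (20, 10, 3), (21, 8, 9), (22, 1, 14), (23, 13, 11), (25, 8, 12),
   (26, 2, 13), (28, 10, 7), (29, 37, 20), (31, 38, 4), (33, 5, 27), (34, 21, 13), (37, 7, 37),
   (38, 14, 15), (39, 60, 18), (41, 15, 34), (43, 10, 43), (46, 34, 7), (47, 16, 41),
   (49, 10, 21), (50, 8, 12), (51, 26, 18), (53, 28, 74), (57, 7, 27), (58, 37, 20),
   (59, 41, 14), (61, 40, 19), (62, 38, 4), (69, 29, 45), (74, 35, 15), (75, 75, 18),
   (82, 15, 34), (86, 10, 43), (87, 7, 81), (93, 24, 180), (94, 13, 46), (98, 10, 21),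
   (106, 75, 42), (111, 63, 9), (118, 41, 14), (122, 9, 61), (123, 246, 9), (129, 25, 189),
   (141, 118, 90), (147, 88, 126), (159, 139, 9), (177, 152, 36), (183, 332, 99)]

lemma hasCollision_of_mem_smallCollisions {m : ℕ} (hm : m ∈ smallCollisions.map Prod.fst) :
    HasCollision m (9 ^ Nat.log 3 m + 1) := by
  have hall : ∀ w ∈ smallCollisions, 1 ≤ w.2.1 ∧ 1 ≤ w.2.2 ∧
      w.1 ^ 2 ∣ w.2.2 * (3 * w.2.1 ^ 2 + 3 * w.2.1 * w.2.2 + w.2.2 ^ 2 + 1) ∧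
      w.2.1 + w.2.2 ≤ 9 ^ Nat.log 3 w.1 + 1 := by
    decide +kernel
  obtain ⟨w, hw, rfl⟩ := List.mem_map.1 hm
  obtain ⟨ha, hd, hdvd, hle⟩ := hall w hw
  exact (hasCollision_of_dvd ha hd hdvd).mono hle

lemma mul_mem_smallCollisions {p j m : ℕ} (hp : p.Prime) (hp5 : 5 ≤ p)
    (hq : p ^ (j + 1) < 67) (hm : 0 < m)
    (h : m ≤ 3 ∨ m = 4 ∧ (p ^ (j + 1) = 5 ∨ p ^ (j + 1) = 7)) :
    p ^ (j + 1) * m ∈ smallCollisions.map Prod.fst := by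
  have hj : j < 2 := by
    by_contra! hj
    have := (Nat.pow_le_pow_left hp5 3).trans
      (Nat.pow_le_pow_right (by lia) (show 3 ≤ j + 1 by lia))
    lia
  have hp67 : p < 67 := (Nat.le_self_pow j.succ_ne_zero p).trans_lt hq
  have hall : ∀ p ∈ Finset.range 67, ∀ j ∈ Finset.range 2, ∀ m ∈ Finset.range 5,
      p.Prime ∧ 5 ≤ p ∧ p ^ (j + 1) < 67 ∧ 0 < m ∧
        (m ≤ 3 ∨ m = 4 ∧ (p ^ (j + 1) = 5 ∨ p ^ (j + 1) = 7)) →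
      p ^ (j + 1) * m ∈ smallCollisions.map Prod.fst := by
    decide +kernel
  exact hall p (Finset.mem_range.2 hp67) j (Finset.mem_range.2 hj) m
    (Finset.mem_range.2 (by lia)) ⟨hp, hp5, hq, hm, h⟩

lemma exists_le_half_dvd_mul_sub_or_add {p : ℕ} [Fact p.Prime] {c d : ℤ}
    (hc : ¬ (p : ℤ) ∣ c) (hd : ¬ (p : ℤ) ∣ d) :
    ∃ e : ℕ, 1 ≤ e ∧ e ≤ p / 2 ∧ ((p : ℤ) ∣ c * e - d ∨ (p : ℤ) ∣ c * e + d) := by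
  simp only [← ZMod.intCast_zmod_eq_zero_iff_dvd] at hc hd ⊢
  set z : ZMod p := d / c with hz
  have hcz : (c : ZMod p) * (z.valMinAbs : ℤ) = d := by
    rw [ZMod.coe_valMinAbs, hz]
    field_simp
  refine ⟨z.valMinAbs.natAbs, Int.natAbs_pos.2 fun h => hd ?_, z.natAbs_valMinAbs_le, ?_⟩
  · rw [← hcz, h, Int.cast_zero, mul_zero]
  · rcases Int.natAbs_eq z.valMinAbs with h | h <;> rw [h] at hcz <;> push_cast at hcz ⊢
    · exact .inl (by linear_combination hcz)
    · exact .inr (by linear_combination -hcz)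

-- The conic is invariant under `(a, d) ↦ (-a, -d)`.
lemma exists_dvd_conic_of_dvd_sub_or_add {M a d D : ℤ}
    (h₀ : M ∣ 3 * a ^ 2 + 3 * a * d + d ^ 2 + 1) (h₁ : ¬ M ∣ 2 * a + d)
    (hD : M ∣ D - d ∨ M ∣ D + d) :
    ∃ a' : ℤ, M ∣ 3 * a' ^ 2 + 3 * D * a' + (D ^ 2 + 1) ∧ ¬ M ∣ 2 * a' + D := by
  obtain ⟨v, hv⟩ := h₀
  rcases hD with ⟨w, hw⟩ | ⟨w, hw⟩
  · refine ⟨a, ⟨v + w * (3 * a + D + d), by linear_combination hv + (3 * a + D + d) * hw⟩, ?_⟩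
    rwa [show 2 * a + D = 2 * a + d + M * w by lia, dvd_add_left (Dvd.intro _ rfl)]
  · refine ⟨-a, ⟨v + w * (-3 * a + D - d), by linear_combination hv + (-3 * a + D - d) * hw⟩, ?_⟩
    rwa [show 2 * -a + D = M * w - (2 * a + d) by lia, dvd_sub_right (Dvd.intro _ rfl)]

lemma hasCollision_of_dvd_conic {p m : ℕ} (hp : p.Prime) (hp5 : 5 ≤ p) (hm : ¬ p ∣ m) {a d : ℤ}
    (h₀ : (p : ℤ) ∣ 3 * a ^ 2 + 3 * a * d + d ^ 2 + 1) (hd : ¬ (p : ℤ) ∣ d)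
    (h₁ : ¬ (p : ℤ) ∣ 2 * a + d) (j : ℕ) :
    HasCollision (p ^ j * m) ((p ^ j) ^ 2 + m ^ 2 * (p / 2)) := by
  have : Fact p.Prime := ⟨hp⟩
  have hpZ : Prime (p : ℤ) := Nat.prime_iff_prime_int.1 hp
  have hm2 : ¬ (p : ℤ) ∣ m ^ 2 := fun h => hm (Int.natCast_dvd_natCast.1 (hpZ.dvd_of_dvd_pow h))
  obtain ⟨e, he, hep, hed⟩ := exists_le_half_dvd_mul_sub_or_add hm2 hd
  obtain ⟨a', h₀', h₁'⟩ := exists_dvd_conic_of_dvd_sub_or_add h₀ h₁ hed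
  have hsimple : ¬ (p : ℤ) ∣ 2 * 3 * a' + 3 * (m ^ 2 * e) := fun h => by
    rw [mul_comm 2, mul_assoc, ← mul_add] at h
    exact (hpZ.dvd_or_dvd h).elim (not_natCast_dvd_three hp5) h₁'
  obtain ⟨b, hb, hbp, hdvd⟩ := exists_nat_prime_pow_dvd_quadratic hp h₀' hsimple (2 * j)
  refine (hasCollision_of_dvd (d := m ^ 2 * e) hb ?_ ?_).mono ?_
  · exact Nat.mul_pos (Nat.pow_pos (Nat.pos_of_ne_zero fun h => hm (h ▸ dvd_zero p))) he
  · rw [mul_pow, mul_comm, ← pow_mul, mul_comm j]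
    refine mul_dvd_mul (Dvd.intro _ rfl) ?_
    zify
    convert hdvd using 1
    ring
  · rw [← pow_mul, mul_comm j]
    gcongr

lemma exists_dvd_conic {p : ℕ} (hp : p.Prime) (hp5 : 5 ≤ p) (hp67 : p < 67) :
    ∃ a d : ℤ, (p : ℤ) ∣ 3 * a ^ 2 + 3 * a * d + d ^ 2 + 1 ∧ ¬ (p : ℤ) ∣ d ∧
      ¬ (p : ℤ) ∣ 2 * a + d := by
  have hall : ∀ p < 67, p.Prime → 5 ≤ p → ∃ a < p, ∃ d < p,
      p ∣ 3 * a ^ 2 + 3 * a * d + d ^ 2 + 1 ∧ ¬ p ∣ d ∧ ¬ p ∣ 2 * a + d := by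
    decide +kernel
  obtain ⟨a, -, d, -, h₀, hd, h₁⟩ := hall p hp67 hp hp5
  exact ⟨a, d, by exact_mod_cast h₀, by exact_mod_cast hd, by exact_mod_cast h₁⟩

lemma nine_mul_sq_add_le_of_odd {q m : ℕ} (hq : Odd q)
    (h : 9 ≤ q ∧ 4 ≤ m ∨ 7 ≤ q ∧ 5 ≤ m ∨ 5 ≤ q ∧ 6 ≤ m) :
    9 * (q ^ 2 + m ^ 2 * (q / 2)) ≤ (q * m) ^ 2 + 9 := by
  obtain ⟨s, rfl⟩ := hq
  rw [show (2 * s + 1) / 2 = s by lia]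
  suffices hfactor : (36 * s * (s + 1) : ℤ) ≤ m ^ 2 * ((4 * s - 1) * (s - 1)) by
    zify
    linarith
  have hmono (c t : ℤ) (hc : c ≤ m ^ 2) (ht : t ≤ s) (ht1 : 1 ≤ t) :
      c * ((4 * s - 1) * (s - 1)) ≤ (m : ℤ) ^ 2 * ((4 * s - 1) * (s - 1)) :=
    mul_le_mul_of_nonneg_right hc (mul_nonneg (by lia) (by lia))
  rcases h with ⟨hs, hm⟩ | ⟨hs, hm⟩ | ⟨hs, hm⟩
  · refine le_trans ?_ (hmono 16 4 (by nlinarith) (by lia) (by lia))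
    have : (4 : ℤ) ≤ s := by lia
    nlinarith
  · refine le_trans ?_ (hmono 25 3 (by nlinarith) (by lia) (by lia))
    have : (3 : ℤ) ≤ s := by lia
    nlinarith
  · refine le_trans ?_ (hmono 36 2 (by nlinarith) (by lia) (by lia))
    have : (2 : ℤ) ≤ s := by lia
    nlinarith

lemma hasCollision_prime_pow_mul_of_lt_sixtySeven {p j m : ℕ} (hp : p.Prime) (hp5 : 5 ≤ p)
    (hq : p ^ (j + 1) < 67) (hm : ¬ p ∣ m) :
    HasCollision (p ^ (j + 1) * m) (9 ^ Nat.log 3 (p ^ (j + 1) * m) + 1) := by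
  have hm0 : 0 < m := Nat.pos_of_ne_zero fun h => hm (h ▸ dvd_zero p)
  by_cases hsmall : m ≤ 3 ∨ m = 4 ∧ (p ^ (j + 1) = 5 ∨ p ^ (j + 1) = 7)
  · exact hasCollision_of_mem_smallCollisions (mul_mem_smallCollisions hp hp5 hq hm0 hsmall)
  push Not at hsmall
  have hpq : p ∣ p ^ (j + 1) := dvd_pow_self p j.succ_ne_zero
  have hple : p ≤ p ^ (j + 1) := Nat.le_of_dvd (by positivity) hpq
  have hodd : Odd (p ^ (j + 1)) := (hp.odd_of_ne_two (by lia)).pow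
  obtain ⟨a, d, h₀, hd, h₁⟩ := exists_dvd_conic hp hp5 (hple.trans_lt hq)
  refine ((hasCollision_of_dvd_conic hp hp5 hm h₀ hd h₁ (j + 1)).mono ?_).of_nine_mul_le
    (nine_mul_sq_add_le_of_odd hodd ?_)
  · gcongr
  · have hne : p ^ (j + 1) = 5 → m ≠ 5 := by
      rintro h rfl
      exact hm (h ▸ hpq)
    obtain ⟨s, hs⟩ := hodd
    lia

/-! ### The discriminator -/

lemma hasCollision_nine_pow_log_add_one {m : ℕ} (hm : 0 < m) :
    HasCollision m (9 ^ Nat.log 3 m + 1) := by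
  by_cases h : ∃ p, p.Prime ∧ 5 ≤ p ∧ p ∣ m
  · obtain ⟨p, hp, hp5, hpm⟩ := h
    obtain ⟨j, r, hr, rfl⟩ := Nat.exists_eq_pow_mul_and_not_dvd hm.ne' p hp.ne_one
    obtain ⟨j, rfl⟩ : ∃ i, j = i + 1 :=
      Nat.exists_eq_succ_of_ne_zero fun h => hr (by simpa [h] using hpm)
    rcases le_or_gt 67 (p ^ (j + 1)) with hq | hq
    · exact hasCollision_prime_pow_mul_of_sixtySeven_le hp hp5 hq hr
    · exact hasCollision_prime_pow_mul_of_lt_sixtySeven hp hp5 hq hr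
  · push Not at h
    obtain ⟨j, r, hr, rfl⟩ := Nat.exists_eq_pow_mul_and_not_dvd hm.ne' 2 (by norm_num)
    have hr0 : r ≠ 0 := fun h => hr (h ▸ dvd_zero 2)
    obtain ⟨i, hi⟩ : ∃ i, r = 3 ^ i := ⟨_, Nat.eq_prime_pow_of_unique_prime_dvd hr0 (p := 3)
      fun {p} hp hpr => by
        have hp5 : p < 5 := not_le.1 fun hp5 => h p hp hp5 (hpr.mul_left _)
        have hp2 : p ≠ 2 := by
          rintro rfl
          exact hr hpr
        interval_cases p <;> first | rfl | lia | exact absurd hp (by norm_num)⟩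
    rw [hi]
    exact hasCollision_two_pow_mul_three_pow j i

lemma sqrt_le_three_pow_iff (n j : ℕ) : √(n : ℝ) ≤ 3 ^ j ↔ n ≤ 9 ^ j := by
  rw [Real.sqrt_le_left (by positivity), ← pow_mul, mul_comm, pow_mul,
    show (3 : ℝ) ^ 2 = (9 : ℕ) by norm_num]
  norm_cast

/-- For an integer `n ≥ 2`, `D(n)` is the smallest positive integer `m` such that the values
`a³ + a` for `1 ≤ a ≤ n` are pairwise distinct modulo `m²`.  If `k` is the least positive
integer `j` with `3^j ≥ √n`, then `D(n) = 3^k`. -/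
theorem sun_conjecture (n : ℕ) (hn : 2 ≤ n) (k : ℕ)
    (hk : IsLeast {j : ℕ | 1 ≤ j ∧ Real.sqrt n ≤ 3 ^ j} k) :
    IsLeast {m : ℕ | 0 < m ∧ ∀ a b : ℕ, 1 ≤ a → a < b → b ≤ n →
      ¬ (b ^ 3 + b ≡ a ^ 3 + a [MOD m ^ 2])} (3 ^ k) := by
  simp only [sqrt_le_three_pow_iff] at hk
  obtain ⟨⟨-, hnk⟩, hmin⟩ := hk
  refine ⟨⟨by positivity, fun a b ha hab hb hmod =>
    not_hasCollision_three_pow k ⟨a, b, ha, hab, hb.trans hnk, hmod⟩⟩, fun m ⟨hm, hinj⟩ => ?_⟩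
  by_contra! hmk
  have hlog : Nat.log 3 m < k := Nat.log_lt_of_lt_pow hm.ne' hmk
  have hlt : 9 ^ Nat.log 3 m < n := by
    rcases Nat.eq_zero_or_pos (Nat.log 3 m) with h0 | hpos
    · rw [h0]
      lia
    · by_contra! hle
      exact hlog.not_ge (hmin ⟨hpos, hle⟩)
  obtain ⟨a, b, ha, hab, hb, hmod⟩ := hasCollision_nine_pow_log_add_one hm
  exact hinj a b ha hab (hb.trans hlt) hmod
end

section
/- Let n ≥ 2·10^{12} and let k = min{ j ∈ ℤ⁺ : 3^j ≥ √n }. Suppose m = δ·p^r satisfies √n < m < 3^k, where δ ∈ {1,2,3}, p ≥ 5 is a prime with p ≡ 2 (mod 3), and r is a positive integer. Then N > 0, i.e. there exist integers 1 ≤ a, b ≤ X with δ⁴(a² + ab + b²) + 1 ≡ 0 (mod p^{2r}). -/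
open Finset

/-!
Let `q = p ^ r` and `g = A(a² + ab + b²) + 1`. If `g` vanishes modulo `q` at `P` with gradient
`u(d, e)`, `u` a unit, then `g(P + q(x, y)) ≡ g(P) + qu(dx + ey)` modulo `q²`, so lifting `P` to
a zero modulo `q²` is a linear congruence for `dx + ey` modulo `q`. For coprime `d, e` it has a
solution in every box of side `L` as soon as `|e| ≤ L` and `q ≤ |e|(L - d)`.

A zero `P` with gradient along `(d, e)` exists when `d² - de + e²` is a nonresidue modulo `p`,
since `-3` is a nonresidue and `A` a residue. To find such `d, e` for `r ≥ 2`, take `d = 1`: the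
box is wider than `p`, so `e` may be any large enough representative of its residue class. For
`r = 1`, more than half of the classes `l` have `l² - l + 1` a nonresidue; writing `l ≡ e / d`
with `d ≤ 9` and `|e| ≤ p / 10` (Dirichlet), only few of them can have small `|e|`.
-/

section FiniteField

variable {F : Type*} [Field F]

lemma isSquare_mul_of_not_isSquare [Finite F] {a b : F} (ha : ¬ IsSquare a) (hb : ¬ IsSquare b) :
    IsSquare (a * b) := by
  classical
  have := Fintype.ofFinite F
  have ha0 : a ≠ 0 := fun h => ha (h ▸ IsSquare.zero)
  have hb0 : b ≠ 0 := fun h => hb (h ▸ IsSquare.zero)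
  rw [← quadraticChar_one_iff_isSquare (mul_ne_zero ha0 hb0), map_mul,
    quadraticChar_neg_one_iff_not_isSquare.2 ha, quadraticChar_neg_one_iff_not_isSquare.2 hb]
  norm_num

lemma exists_three_mul_sq_eq_neg_one [Finite F] {A c : F} (h3 : ¬ IsSquare (-3 : F))
    (hA : IsSquare A) (hA0 : A ≠ 0) (hc : ¬ IsSquare c) : ∃ z, 3 * A * c * z ^ 2 = -1 := by
  obtain ⟨w, rfl⟩ := hA
  obtain ⟨y, hy⟩ := isSquare_mul_of_not_isSquare h3 hc
  have hw : w ≠ 0 := left_ne_zero_of_mul hA0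
  have hy0 : y ≠ 0 := by
    rintro rfl
    rcases mul_eq_zero.1 (hy.trans (mul_zero 0)) with h | h
    · exact h3 (h ▸ IsSquare.zero)
    · exact hc (h ▸ IsSquare.zero)
  refine ⟨(w * y)⁻¹, ?_⟩
  field_simp
  linear_combination -hy

variable [Fintype F]

lemma not_isSquare_neg_three_of_card_mod_three (h2 : (2 : F) ≠ 0)
    (hF : Fintype.card F % 3 = 2) : ¬ IsSquare (-3 : F) := by
  rintro ⟨y, hy⟩
  have : NeZero (2 : F) := ⟨h2⟩
  obtain ⟨ω, hω⟩ := exists_quadratic_eq_zero (a := (1 : F)) (b := 1) (c := 1) one_ne_zero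
    ⟨y, by rw [← hy, discrim]; norm_num⟩
  have hω0 : ω ≠ 0 := by
    rintro rfl
    simp at hω
  have hω1 : ω ≠ 1 := by
    rintro rfl
    have hcard : (Fintype.card F : F) = 0 := FiniteField.cast_card_eq_zero F
    rw [← Nat.div_add_mod (Fintype.card F) 3, hF] at hcard
    push_cast at hcard
    exact h2 (by linear_combination hcard - (Fintype.card F / 3 : ℕ) * hω)
  have horder : orderOf ω = 3 := orderOf_eq_prime (by linear_combination (ω - 1) * hω) hω1
  have hdvd := orderOf_dvd_of_pow_eq_one (FiniteField.pow_card_sub_one_eq_one ω hω0)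
  rw [horder] at hdvd
  omega

variable [DecidableEq F]

lemma two_mul_card_isSquare_quadratic_lt {b c : F} (hD : ¬ IsSquare (b ^ 2 - 4 * c)) :
    2 * #{x : F | IsSquare (x ^ 2 + b * x + c)} < Fintype.card F := by
  have h2 : (2 : F) ≠ 0 := fun h => hD ⟨b, by linear_combination -2 * c * h⟩
  have hD0 : b ^ 2 - 4 * c ≠ 0 := fun h => hD (h ▸ IsSquare.zero)
  -- `y² = x² + bx + c` is the hyperbola `uv = b² - 4c`, where `u, v = 2x + b ± 2y`. So `x` is
  -- determined by `u ≠ 0`, and `u, v` are two values for the same `x`.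
  let x (u : F) : F := ((u + (b ^ 2 - 4 * c) / u) / 2 - b) / 2
  have hfibre : ∀ t ∈ ({t : F | IsSquare (t ^ 2 + b * t + c)} : Finset F),
      2 ≤ #{u ∈ univ.erase (0 : F) | x u = t} := by
    intro t ht
    obtain ⟨y, hy⟩ := (mem_filter.1 ht).2
    have huv : (2 * t + b + 2 * y) * (2 * t + b - 2 * y) = b ^ 2 - 4 * c := by
      linear_combination 4 * hy
    have hu0 := left_ne_zero_of_mul (huv ▸ hD0)
    have hv0 := right_ne_zero_of_mul (huv ▸ hD0)
    have hne : 2 * t + b + 2 * y ≠ 2 * t + b - 2 * y :=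
      fun h => hD ⟨_, by rw [← huv, ← h]⟩
    refine (card_pair hne).symm.le.trans (card_le_card ?_)
    intro u hu
    simp only [mem_insert, mem_singleton] at hu
    simp only [mem_filter, mem_erase, mem_univ, and_true, x, ← huv]
    rcases hu with rfl | rfl
    · refine ⟨hu0, ?_⟩
      field_simp
      ring
    · refine ⟨hv0, ?_⟩
      field_simp
      ring
  calc 2 * #{t : F | IsSquare (t ^ 2 + b * t + c)}
      = #{t : F | IsSquare (t ^ 2 + b * t + c)} • 2 := mul_comm _ _
    _ ≤ _ := card_nsmul_le_sum _ _ 2 hfibre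
    _ = _ := sum_card_fiberwise_eq_card_filter _ _ x
    _ ≤ #(univ.erase (0 : F)) := card_filter_le _ _
    _ < Fintype.card F := card_erase_lt_of_mem (mem_univ 0)

lemma card_lt_two_mul_card_not_isSquare_quadratic {b c : F} (hD : ¬ IsSquare (b ^ 2 - 4 * c)) :
    Fintype.card F < 2 * #{x : F | ¬ IsSquare (x ^ 2 + b * x + c)} := by
  have hlt := two_mul_card_isSquare_quadratic_lt hD
  have hadd := card_filter_add_card_filter_not (s := (univ : Finset F))
    (fun x => IsSquare (x ^ 2 + b * x + c))
  rw [card_univ] at hadd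
  omega

end FiniteField

lemma exists_pow_dvd_mul_sq_add_one {R : Type*} [CommRing R] {p : ℕ} (hp : Odd p) {c z : R}
    (h : (p : R) ∣ c * z ^ 2 + 1) (r : ℕ) : ∃ s, (p : R) ^ r ∣ c * s ^ 2 + 1 := by
  -- Raising `c z² ≡ -1` to the odd power `p ^ r` gives a congruence modulo `p ^ (r + 1)`
  -- whose left side is still `c` times a square.
  have hpow : (p : R) ^ (r + 1) ∣ (c * z ^ 2) ^ p ^ r - (-1) ^ p ^ r :=
    dvd_sub_pow_of_dvd_sub (by rwa [sub_neg_eq_add]) r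
  obtain ⟨h, hh⟩ : Odd (p ^ r) := hp.pow
  rw [(hp.pow (n := r)).neg_one_pow, sub_neg_eq_add, hh] at hpow
  refine ⟨c ^ h * z ^ (2 * h + 1), (pow_dvd_pow _ r.le_succ).trans ?_⟩
  convert hpow using 1
  ring

section Box

lemma exists_mul_add_mul_eq {d e : ℤ} (he : 0 < e) (hco : IsCoprime d e) (T : ℤ) :
    ∃ x y, 0 ≤ x ∧ x < e ∧ d * x + e * y = T := by
  obtain ⟨u, v, huv⟩ := hco
  refine ⟨u * T % e, v * T + d * (u * T / e), Int.emod_nonneg _ he.ne', Int.emod_lt_of_pos _ he, ?_⟩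
  linear_combination T * huv + d * Int.mul_ediv_add_emod (u * T) e

lemma exists_dvd_mul_add_mul_sub_of_pos {q L d e : ℤ} (hq : 0 < q) (hd : 0 ≤ d) (he : 0 < e)
    (hco : IsCoprime d e) (heL : e ≤ L) (hqL : q ≤ e * (L - d)) (t : ℤ) :
    ∃ x ∈ Set.Ico 0 L, ∃ y ∈ Set.Ico 0 L, q ∣ d * x + e * y - t := by
  obtain ⟨k, ⟨hlower, hupper⟩, -⟩ := existsUnique_add_zsmul_mem_Ico hq t (e * d)
  rw [smul_eq_mul] at hlower hupper
  obtain ⟨x, y, hx0, hxe, hxy⟩ := exists_mul_add_mul_eq he hco (t + k * q)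
  have hy0 : 0 ≤ y := by nlinarith
  have hyL : y < L := by nlinarith
  exact ⟨x, ⟨hx0, by omega⟩, y, ⟨hy0, hyL⟩, k, by linear_combination hxy⟩

lemma exists_dvd_mul_add_mul_sub {q L d e : ℤ} (hq : 0 < q) (hd : 0 ≤ d) (hco : IsCoprime d e)
    (heL : |e| ≤ L) (hqL : q ≤ |e| * (L - d)) (i j t : ℤ) :
    ∃ x ∈ Set.Ico i (i + L), ∃ y ∈ Set.Ico j (j + L), q ∣ d * x + e * y - t := by
  rcases lt_trichotomy e 0 with he | rfl | he
  · rw [abs_of_neg he] at heL hqL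
    -- The reflection `y ↦ L - 1 - y` of `[0, L)` changes the sign of `e`.
    obtain ⟨x, ⟨hx0, hxL⟩, y, ⟨hy0, hyL⟩, hdvd⟩ := exists_dvd_mul_add_mul_sub_of_pos hq hd
      (neg_pos.2 he) hco.neg_right heL hqL (t - d * i - e * (j + L - 1))
    refine ⟨i + x, ⟨by omega, by omega⟩, j + (L - 1 - y), ⟨by omega, by omega⟩, ?_⟩
    convert hdvd using 1
    ring
  · rw [abs_zero, zero_mul] at hqL
    exact absurd hq hqL.not_gt
  · rw [abs_of_pos he] at heL hqL
    obtain ⟨x, ⟨hx0, hxL⟩, y, ⟨hy0, hyL⟩, hdvd⟩ := exists_dvd_mul_add_mul_sub_of_pos hq hd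
      he hco heL hqL (t - d * i - e * j)
    refine ⟨i + x, ⟨by omega, by omega⟩, j + y, ⟨by omega, by omega⟩, ?_⟩
    convert hdvd using 1
    ring

lemma exists_forall_mem_Ico_add_mul_mem_Icc {q : ℤ} (hq : 0 < q) (L α : ℤ) :
    ∃ i, ∀ x ∈ Set.Ico i (i + L), α + q * x ∈ Set.Icc 1 (L * q) := by
  obtain ⟨i, ⟨hlower, hupper⟩, -⟩ := existsUnique_add_zsmul_mem_Ico hq α 1
  rw [smul_eq_mul] at hlower hupper
  exact ⟨i, fun x ⟨hix, hxL⟩ => ⟨by nlinarith, by nlinarith⟩⟩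

/- The gradient of `A(a² + ab + b²)` at `(s(2d - e), s(2e - d))` is `3As(d, e)`, and there the
form takes the value `3A(d² - de + e²)s²`. -/
lemma exists_sq_dvd_mul_add_one_of_isCoprime {q L d e A s : ℤ} (hq : 0 < q) (hd : 0 ≤ d)
    (hco : IsCoprime d e) (heL : |e| ≤ L) (hqL : q ≤ |e| * (L - d))
    (hs : q ∣ 3 * A * (d ^ 2 - d * e + e ^ 2) * s ^ 2 + 1) :
    ∃ a ∈ Set.Icc 1 (L * q), ∃ b ∈ Set.Icc 1 (L * q),
      q ^ 2 ∣ A * (a ^ 2 + a * b + b ^ 2) + 1 := by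
  obtain ⟨K, hK⟩ := hs
  obtain ⟨i, hi⟩ := exists_forall_mem_Ico_add_mul_mem_Icc hq L (s * (2 * d - e))
  obtain ⟨j, hj⟩ := exists_forall_mem_Ico_add_mul_mem_Icc hq L (s * (2 * e - d))
  obtain ⟨x, hx, y, hy, w, hw⟩ := exists_dvd_mul_add_mul_sub hq hd hco heL hqL i j
    (K * (d ^ 2 - d * e + e ^ 2) * s)
  refine ⟨_, hi x hx, _, hj y hy, K ^ 2 + 3 * A * s * w + A * (x ^ 2 + x * y + y ^ 2), ?_⟩
  linear_combination (1 + q * K) * hK + q * (3 * A * s) * hw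

end Box

section Prime

variable {p : ℕ} [Fact p.Prime]

lemma exists_isCoprime_mul_eq_intCast {n : ℕ} (hn : 0 < n) (hnp : n < p) (l : ZMod p) :
    ∃ d e : ℤ, 0 < d ∧ d ≤ n ∧ (n + 1) * |e| ≤ p ∧ IsCoprime d e ∧ (d : ZMod p) * l = e := by
  have hp : (0 : ℝ) < p := mod_cast (hn.trans hnp)
  obtain ⟨ξ, hξ, hden⟩ := Real.exists_rat_abs_sub_le_and_den_le ((l.val : ℝ) / p) hn
  have hdenp : IsCoprime (ξ.den : ℤ) p := Nat.isCoprime_iff_coprime.2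
    (Nat.coprime_of_lt_prime ξ.den_ne_zero (hden.trans_lt hnp) Fact.out).symm
  refine ⟨ξ.den, ξ.den * l.val - ξ.num * p, mod_cast ξ.den_pos, mod_cast hden, ?_, ?_, ?_⟩
  · have hdist : (ξ.den * l.val - ξ.num * p : ℝ) = ((l.val : ℝ) / p - ξ) * (ξ.den * p) := by
      have hden0 : (ξ.den : ℝ) ≠ 0 := mod_cast ξ.den_ne_zero
      rw [Rat.cast_def]
      field_simp
    have hbound : (n + 1) * |(ξ.den * l.val - ξ.num * p : ℝ)| ≤ p := by
      rw [hdist, abs_mul, abs_of_pos (by positivity : (0 : ℝ) < ξ.den * p)]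
      rw [le_div_iff₀ (by positivity)] at hξ
      nlinarith
    exact_mod_cast hbound
  · rw [sub_eq_add_neg, add_comm, IsCoprime.add_mul_left_right_iff]
    exact (ξ.isCoprime_num_den.symm.mul_right hdenp).neg_right
  · push_cast
    simp

lemma card_lt_two_mul_card_not_isSquare_sq_sub_add_one (h3 : ¬ IsSquare (-3 : ZMod p)) :
    p < 2 * #{l : ZMod p | ¬ IsSquare (l ^ 2 - l + 1)} := by
  have hcard := card_lt_two_mul_card_not_isSquare_quadratic (F := ZMod p) (b := -1) (c := 1)
    (by convert h3 using 2; norm_num)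
  simpa only [ZMod.card, neg_one_mul, ← sub_eq_add_neg] using hcard

lemma exists_mem_Ico_not_isSquare (h3 : ¬ IsSquare (-3 : ZMod p)) (B : ℤ) :
    ∃ e ∈ Set.Ico B (B + p), ¬ IsSquare ((e : ZMod p) ^ 2 - e + 1) := by
  have hp : (0 : ℤ) < p := mod_cast (Fact.out : p.Prime).pos
  have hcard := card_lt_two_mul_card_not_isSquare_sq_sub_add_one h3
  obtain ⟨l, hl⟩ := card_pos.1 (by omega : 0 < #{l : ZMod p | ¬ IsSquare (l ^ 2 - l + 1)})
  obtain ⟨k, hk, -⟩ := existsUnique_add_zsmul_mem_Ico hp (l.val : ℤ) B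
  exact ⟨_, hk, by simpa using hl⟩

lemma exists_isCoprime_lt_abs_not_isSquare (h3 : ¬ IsSquare (-3 : ZMod p)) {n B : ℕ}
    (hn : 0 < n) (hB : 2 * (n * (2 * B + 1)) ≤ p) :
    ∃ d e : ℤ, 0 < d ∧ d ≤ n ∧ B < |e| ∧ (n + 1) * |e| ≤ p ∧ IsCoprime d e ∧
      ¬ IsSquare ((d : ZMod p) ^ 2 - d * e + e ^ 2) := by
  have hnp : n < p := by nlinarith
  choose d e hd hdn he hco hde using exists_isCoprime_mul_eq_intCast hn hnp
  have hd0 (l : ZMod p) : (d l : ZMod p) ≠ 0 := by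
    rw [Ne, ZMod.intCast_zmod_eq_zero_iff_dvd]
    exact fun hdvd => by linarith [Int.le_of_dvd (hd l) hdvd, hdn l]
  obtain ⟨l, hl, hBl⟩ : ∃ l : ZMod p, ¬ IsSquare (l ^ 2 - l + 1) ∧ B < |e l| := by
    by_contra! hsmall
    have hcard := card_le_card_of_injOn (s := {l : ZMod p | ¬ IsSquare (l ^ 2 - l + 1)})
      (t := Icc (1 : ℤ) n ×ˢ Icc (-B : ℤ) B) (fun l => (d l, e l))
      (fun l hl => mem_coe.2 <| mem_product.2 ⟨mem_Icc.2 ⟨hd l, hdn l⟩,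
        mem_Icc.2 (abs_le.1 (hsmall l (mem_filter.1 hl).2))⟩)
      (fun l _ l' _ heq => mul_left_cancel₀ (hd0 l) <| by
        obtain ⟨hdeq, heeq⟩ := Prod.mk.inj heq
        rw [hde l, hdeq, hde l', heeq])
    have hlt := card_lt_two_mul_card_not_isSquare_sq_sub_add_one h3
    rw [card_product, Int.card_Icc, Int.card_Icc, show ((n : ℤ) + 1 - 1).toNat = n by omega,
      show ((B : ℤ) + 1 - -B).toNat = 2 * B + 1 by omega] at hcard
    omega
  refine ⟨d l, e l, hd l, hdn l, hBl, he l, hco l, fun ⟨x, hx⟩ => hl ⟨x / d l, ?_⟩⟩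
  have := hd0 l
  rw [← hde l] at hx
  field_simp
  linear_combination hx

lemma exists_pow_two_mul_dvd_mul_add_one (h3 : ¬ IsSquare (-3 : ZMod p))
    {r : ℕ} {A L d e : ℤ} (hA : IsSquare (A : ZMod p)) (hA0 : (A : ZMod p) ≠ 0) (hd : 0 ≤ d)
    (hco : IsCoprime d e) (heL : |e| ≤ L) (hqL : (p : ℤ) ^ r ≤ |e| * (L - d))
    (hde : ¬ IsSquare ((d : ZMod p) ^ 2 - d * e + e ^ 2)) :
    ∃ a ∈ Set.Icc 1 (L * (p : ℤ) ^ r), ∃ b ∈ Set.Icc 1 (L * (p : ℤ) ^ r),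
      (p : ℤ) ^ (2 * r) ∣ A * (a ^ 2 + a * b + b ^ 2) + 1 := by
  have hp : Odd p := (Fact.out : p.Prime).odd_of_ne_two fun h2 =>
    h3 (FiniteField.isSquare_of_char_two ((ZMod.ringChar_zmod_n p).trans h2) _)
  obtain ⟨ζ, hζ⟩ := exists_three_mul_sq_eq_neg_one h3 hA hA0 hde
  obtain ⟨z, rfl⟩ := ZMod.intCast_surjective ζ
  have hz : (p : ℤ) ∣ 3 * A * (d ^ 2 - d * e + e ^ 2) * z ^ 2 + 1 := by
    rw [← ZMod.intCast_zmod_eq_zero_iff_dvd]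
    push_cast
    rw [hζ, neg_add_cancel]
  obtain ⟨s, hs⟩ := exists_pow_dvd_mul_sq_add_one hp hz r
  have hq : 0 < (p : ℤ) ^ r := pow_pos (mod_cast (Fact.out : p.Prime).pos) r
  rw [mul_comm 2 r, pow_mul]
  exact exists_sq_dvd_mul_add_one_of_isCoprime hq hd hco heL hqL hs

end Prime

/-- The integer `L` such that the box side `X` of the theorem is `L * p ^ r`. For `p = 5` this
is meaningful only when `2 ≤ r`, because of the truncated subtraction. -/
def boxRatio (p r : ℕ) : ℕ :=
  if p = 5 then p ^ 2 / 9 * p ^ (r - 2) else p / 9 * p ^ (r - 1)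

section BoxRatio

variable {p r : ℕ}

lemma five_and_two_le_or_eleven_le (hp : p.Prime) (hp5 : 5 ≤ p) (hp3 : p % 3 = 2)
    (hq : 5 < p ^ r) : p = 5 ∧ 2 ≤ r ∨ 11 ≤ p ∧ 1 ≤ r := by
  have hr : r ≠ 0 := by
    rintro rfl
    simp at hq
  have hp8 : p ≠ 8 := by
    rintro rfl
    norm_num at hp
  have hpr : p = 5 → r ≠ 1 := by
    rintro rfl rfl
    norm_num at hq
  omega

lemma boxRatio_mul_pow (hpr : p = 5 ∧ 2 ≤ r ∨ 11 ≤ p ∧ 1 ≤ r) :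
    boxRatio p r * p ^ r =
      if p = 5 then p ^ 2 / 9 * p ^ (2 * r - 2) else p / 9 * p ^ (2 * r - 1) := by
  unfold boxRatio
  split_ifs with h5
  · rw [mul_assoc, ← pow_add, show r - 2 + r = 2 * r - 2 by omega]
  · rw [mul_assoc, ← pow_add, show r - 1 + r = 2 * r - 1 by omega]

lemma pow_le_mul_boxRatio (hpr : p = 5 ∧ 2 ≤ r ∨ 11 ≤ p ∧ 1 ≤ r) :
    p ^ r ≤ 17 * boxRatio p r := by
  unfold boxRatio
  rcases hpr with ⟨rfl, hr⟩ | ⟨hp, hr⟩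
  · rw [if_pos rfl, ← Nat.add_sub_cancel' hr, pow_add, Nat.add_sub_cancel_left]
    omega
  · rw [if_neg (by omega), ← Nat.add_sub_cancel' hr, pow_add, pow_one, Nat.add_sub_cancel_left,
      ← mul_assoc]
    exact Nat.mul_le_mul_right _ (by omega)

lemma boxRatio_one (hp : p ≠ 5) : boxRatio p 1 = p / 9 := by
  simp [boxRatio, hp]

lemma add_le_boxRatio (hpr : p = 5 ∧ 2 ≤ r ∨ 11 ≤ p ∧ 1 ≤ r) (hr : 2 ≤ r) (hq : 1000 ≤ p ^ r) :
    p + 18 ≤ boxRatio p r := by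
  have hL := pow_le_mul_boxRatio hpr
  have hp2 : p ^ 2 ≤ p ^ r := Nat.pow_le_pow_right (by omega) hr
  rcases Nat.lt_or_ge p 41 with hp | hp
  · omega
  · nlinarith

lemma exists_isCoprime_le_boxRatio [Fact p.Prime] (h3 : ¬ IsSquare (-3 : ZMod p))
    (hpr : p = 5 ∧ 2 ≤ r ∨ 11 ≤ p ∧ 1 ≤ r) (hq : 1000 ≤ p ^ r) :
    ∃ d e : ℤ, 0 < d ∧ IsCoprime d e ∧ |e| ≤ boxRatio p r ∧
      (p : ℤ) ^ r ≤ |e| * (boxRatio p r - d) ∧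
      ¬ IsSquare ((d : ZMod p) ^ 2 - d * e + e ^ 2) := by
  rcases (by omega : r = 1 ∨ 2 ≤ r) with rfl | hr
  · rw [pow_one] at hq ⊢
    rw [boxRatio_one (by omega)]
    obtain ⟨d, e, hd, hd9, he, hep, hco, hde⟩ :=
      exists_isCoprime_lt_abs_not_isSquare h3 (n := 9) (B := 17) (by norm_num) (by omega)
    push_cast at hd9 he hep ⊢
    refine ⟨d, e, hd, hco, by omega, ?_, hde⟩
    calc (p : ℤ) ≤ 18 * (p / 9 - d) := by omega
      _ ≤ |e| * (p / 9 - d) := mul_le_mul_of_nonneg_right he (by omega)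
  · obtain ⟨e, ⟨he, hep⟩, hde⟩ := exists_mem_Ico_not_isSquare h3 18
    have hL := add_le_boxRatio hpr hr hq
    have hqL : (p : ℤ) ^ r ≤ 17 * boxRatio p r := mod_cast pow_le_mul_boxRatio hpr
    have habs : |e| = e := abs_of_pos (by omega)
    refine ⟨1, e, one_pos, isCoprime_one_left, by omega, ?_, ?_⟩
    · calc (p : ℤ) ^ r ≤ 18 * (boxRatio p r - 1) := by omega
        _ ≤ |e| * (boxRatio p r - 1) :=
          mul_le_mul_of_nonneg_right (he.trans_eq habs.symm) (by omega)
    · convert hde using 2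
      push_cast
      ring

end BoxRatio

lemma lt_of_sqrt_lt_mul {n δ c q : ℕ} (hn : (δ * c) ^ 2 ≤ n) (h : √n < (δ * q : ℕ)) :
    c < q := by
  have hsqrt : ((δ * c : ℕ) : ℝ) ≤ √n := Real.le_sqrt_of_sq_le (mod_cast hn)
  exact Nat.lt_of_mul_lt_mul_left (mod_cast hsqrt.trans_lt h)

theorem N_pos_general (δ r p : ℕ) (hp : p.Prime) (hp5 : 5 ≤ p) (hp3 : p % 3 = 2)
    (hδ : ¬ p ∣ δ) (hq : 1000 ≤ p ^ r) (X : ℕ)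
    (hX : X = if p = 5 then p ^ 2 / 9 * p ^ (2 * r - 2) else p / 9 * p ^ (2 * r - 1))
    (N : ℕ)
    (hN : N = ((Finset.Icc 1 X ×ˢ Finset.Icc 1 X).filter
      (fun ab => (δ ^ 4 * (ab.1 ^ 2 + ab.1 * ab.2 + ab.2 ^ 2) + 1) % p ^ (2 * r) = 0)).card) :
    0 < N ∧ ∃ a b : ℕ, 1 ≤ a ∧ a ≤ X ∧ 1 ≤ b ∧ b ≤ X ∧
      (δ ^ 4 * (a ^ 2 + a * b + b ^ 2) + 1) % p ^ (2 * r) = 0 := by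
  have : Fact p.Prime := ⟨hp⟩
  have h2 : (2 : ZMod p) ≠ 0 := by
    exact_mod_cast (ZMod.natCast_eq_zero_iff 2 p).not.2
      (Nat.not_dvd_of_pos_of_lt two_pos (by omega))
  have h3 := not_isSquare_neg_three_of_card_mod_three h2 (by rwa [ZMod.card])
  have hδ0 : (((δ ^ 4 : ℕ) : ℤ) : ZMod p) ≠ 0 := by
    rw [Int.cast_natCast, Ne, ZMod.natCast_eq_zero_iff]
    exact fun h => hδ (hp.dvd_of_dvd_pow h)
  have hpr := five_and_two_le_or_eleven_le hp hp5 hp3 (r := r) (by omega)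
  obtain ⟨d, e, hd, hco, heL, hqL, hde⟩ := exists_isCoprime_le_boxRatio h3 hpr hq
  obtain ⟨a, ⟨ha1, haX⟩, b, ⟨hb1, hbX⟩, hdvd⟩ := exists_pow_two_mul_dvd_mul_add_one h3
    (A := (δ ^ 4 : ℕ)) ⟨(δ : ZMod p) ^ 2, by push_cast; ring⟩ hδ0 hd.le hco heL hqL hde
  lift a to ℕ using by omega
  lift b to ℕ using by omega
  norm_cast at ha1 haX hb1 hbX hdvd
  rw [boxRatio_mul_pow hpr, ← hX] at haX hbX
  have hzero := Nat.mod_eq_zero_of_dvd hdvd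
  refine ⟨?_, a, b, ha1, haX, hb1, hbX, hzero⟩
  rw [hN]
  exact card_pos.2 ⟨(a, b), mem_filter.2
    ⟨mem_product.2 ⟨mem_Icc.2 ⟨ha1, haX⟩, mem_Icc.2 ⟨hb1, hbX⟩⟩, hzero⟩⟩

/-- For `n ≥ 2·10¹²` and `m = δ·p^r` with `√n < m < 3^k`, `δ ∈ {1,2,3}`,
`p ≥ 5` prime, `p ≡ 2 (mod 3)`, `r ≥ 1`, the counting function `N` is positive:
there exist `1 ≤ a, b ≤ X` with `δ⁴(a² + ab + b²) + 1 ≡ 0 (mod p^(2r))`. -/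
theorem N_pos (n : ℕ) (hn : 2 * 10 ^ 12 ≤ n) (k : ℕ)
    (hk : IsLeast {j : ℕ | 1 ≤ j ∧ Real.sqrt n ≤ 3 ^ j} k)
    (m δ r p : ℕ) (hp : p.Prime) (hp5 : 5 ≤ p) (hp3 : p % 3 = 2)
    (hδ1 : 1 ≤ δ) (hδ3 : δ ≤ 3) (hr : 1 ≤ r) (hm : m = δ * p ^ r)
    (hm1 : Real.sqrt n < m) (hm2 : m < 3 ^ k)
    (X : ℕ)
    (hX : X = if p = 5 then p ^ 2 / 9 * p ^ (2 * r - 2) else p / 9 * p ^ (2 * r - 1))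
    (N : ℕ)
    (hN : N = ((Finset.Icc 1 X ×ˢ Finset.Icc 1 X).filter
      (fun ab => (δ ^ 4 * (ab.1 ^ 2 + ab.1 * ab.2 + ab.2 ^ 2) + 1) % p ^ (2 * r) = 0)).card) :
    0 < N ∧ ∃ a b : ℕ, 1 ≤ a ∧ a ≤ X ∧ 1 ≤ b ∧ b ≤ X ∧
      (δ ^ 4 * (a ^ 2 + a * b + b ^ 2) + 1) % p ^ (2 * r) = 0 := by
  have hq : 1000 < p ^ r := lt_of_sqrt_lt_mul (by nlinarith) (hm ▸ hm1)
  exact N_pos_general δ r p hp hp5 hp3 (Nat.not_dvd_of_pos_of_lt hδ1 (by omega)) hq.le X hX N hN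
end
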